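/- For every odd prime p and every ε ∈ (0,1], there exist a positive integer n1(p,ε) and c = c(p,ε) ∈ (0,1/2] such that the following holds for all positive integers n ≥ n1(p,ε) and k. Assume that for independent uniformly distributed z_1, …, z_k ∈ F_p^n, with probability at least 1/2 there exists a set B ⊆ F_p^n with |B| ≥ ε·p^n such that every nontrivial line containing at least one of z_1, …, z_k meets B in at most p−2 points. Then there exists a (p−1, c, c)-locally decodable code sending {0,1}^l to {0,1}^{p^n}, where l = Ω(c²·k / log(1/c)) (with an absolute implied constant). -/

import Mathlib

/-- A randomized non-adaptive `q`-query decoder for codewords in `{0,1}^n`, modeled as a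
finitely supported probability distribution over pairs `(S, g)` where `S` is the query set
(of size at most `q`) and `g` is an output function depending only on the coordinates in `S`. -/
structure Decoder (n q : ℕ) where
  p : Finset (Fin n) × ((Fin n → Bool) → Bool) → ℝ
  nonneg : ∀ a, 0 ≤ p a
  sum_one : ∑ a, p a = 1
  query_bound : ∀ a, p a ≠ 0 → a.1.card ≤ q
  local_dep : ∀ a, p a ≠ 0 → ∀ y y' : Fin n → Bool, (∀ j ∈ a.1, y j = y' j) → a.2 y = a.2 y'

/-- The probability that the decoder `D`, run on input `y`, outputs the bit `b`. -/
noncomputable def Decoder.correctProb {n q : ℕ} (D : Decoder n q) (y : Fin n → Bool)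
    (b : Bool) : ℝ :=
  ∑ a : Finset (Fin n) × ((Fin n → Bool) → Bool), if a.2 y = b then D.p a else 0

/-- The probability that the decoder `D` queries coordinate `j`. -/
noncomputable def Decoder.queryProb {n q : ℕ} (D : Decoder n q) (j : Fin n) : ℝ :=
  ∑ a : Finset (Fin n) × ((Fin n → Bool) → Bool), if j ∈ a.1 then D.p a else 0

/-- `C : {0,1}^k → {0,1}^n` is a `(q,δ,η)`-locally decodable code. -/
def IsLDC (k n q : ℕ) (δ η : ℝ) (C : (Fin k → Bool) → Fin n → Bool) : Prop :=
  ∀ i : Fin k, ∃ D : Decoder n q,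
    ∀ x : Fin k → Bool, ∀ y : Fin n → Bool,
      ((Finset.univ.filter fun j => y j ≠ C x j).card : ℝ) ≤ δ * n →
      1/2 + η ≤ D.correctProb y (x i)

/-- `C : {0,1}^k → {0,1}^n` is a `(q,c,η)`-smooth code. -/
def IsSmoothCode (k n q : ℕ) (c η : ℝ) (C : (Fin k → Bool) → Fin n → Bool) : Prop :=
  ∀ i : Fin k, ∃ D : Decoder n q,
    (∀ x : Fin k → Bool, 1/2 + η ≤ D.correctProb (C x) (x i)) ∧
    ∀ j : Fin n, D.queryProb j ≤ c / n

/-- `C : {0,1}^k → {0,1}^n` is a `(q,c,η)`-average-case smooth code: the success probability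
`1/2 + η` is only required on average over a uniform message `x` and uniform index `i`. -/
def IsAvgSmoothCode (k n q : ℕ) (c η : ℝ) (C : (Fin k → Bool) → Fin n → Bool) : Prop :=
  ∃ D : Fin k → Decoder n q,
    (∀ i : Fin k, ∀ j : Fin n, (D i).queryProb j ≤ c / n) ∧
    1/2 + η ≤ (∑ x : Fin k → Bool, ∑ i : Fin k, (D i).correctProb (C x) (x i)) / (2^k * k)

/-!
The density Hales–Jewett theorem over the alphabet `F`, averaged over random maps `F^m → V`, shows
that for every set `B ⊆ V` of density at least `ε` a positive proportion of the pairs of a point `w`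
and a direction `y` have the whole line `w + F y` inside `B`. The theorem itself is proved by a
density increment: a dense set without combinatorial lines over `Option α` correlates with an
intersection of sets insensitive to exchanging `none` with a letter of `α`, and such an intersection
is exhausted by subspaces because density Hales–Jewett holds over `α`.

To encode a message `x`, fix points `w i b` for every index `i` and bit `b`, and let `B` be a dense
set none of whose lines through the points `w i (!x i)` is full outside that point. By averaging,
the points can be chosen so that lines through the points `w i (x i)` are still full with positive
probability. The codeword of `x` is the indicator function of `B`, and the decoder for `x i` guesses
a bit `b` and tests whether a random line through `w i b` is full outside `w i b`. This succeeds
only on average over `x` and `i`. Comparing the probability of the output `true` with a threshold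
turns the average into a set of partial functions `i ↦ x i`. By a weighted form of the Sauer–Shelah
lemma it shatters many indices, and restricting to these gives a code that is correct for every
message.
-/

open Finset Function
open scoped BigOperators

section Averages

variable {X Y : Type*} [Fintype X] [Fintype Y]

/-- The proportion of the points of a finite type that lie in `A`, written as an average so that
the calculus of `𝔼` applies to it. -/
noncomputable def density (A : Set X) : ℝ :=
  𝔼 x, A.indicator (1 : X → ℝ) x

lemma density_nonneg (A : Set X) : 0 ≤ density A :=
  expect_nonneg fun _ _ ↦ Set.indicator_nonneg (fun _ _ ↦ zero_le_one) _

lemma density_mono {A B : Set X} (h : A ⊆ B) : density A ≤ density B :=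
  expect_le_expect fun _ _ ↦
    Set.indicator_le_indicator_of_subset h (fun _ ↦ zero_le_one) _

lemma density_eq_ncard_div (A : Set X) : density A = A.ncard / Fintype.card X := by
  classical
  rw [density, Fintype.expect_eq_sum_div_card, Set.ncard_eq_toFinset_card', Set.toFinset,
    Finset.card_eq_sum_ones]
  simp [Set.indicator_apply, Finset.sum_boole]

lemma density_empty : density (∅ : Set X) = 0 := by
  simp [density]

lemma density_le_one (A : Set X) : density A ≤ 1 := by
  rw [density_eq_ncard_div]
  refine div_le_one_of_le₀ ?_ (Nat.cast_nonneg _)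
  exact_mod_cast Nat.card_eq_fintype_card (α := X) ▸ Set.ncard_le_card A

lemma nonempty_of_density_pos {A : Set X} (h : 0 < density A) : A.Nonempty := by
  rw [Set.nonempty_iff_ne_empty]
  rintro rfl
  exact h.ne' density_empty

lemma density_union_le (A B : Set X) : density (A ∪ B) ≤ density A + density B := by
  rw [density, density, density, ← expect_add_distrib]
  refine expect_le_expect fun x _ ↦ ?_
  by_cases hA : x ∈ A <;> by_cases hB : x ∈ B <;> simp [hA, hB]

lemma density_diff {A B : Set X} (h : B ⊆ A) : density (A \ B) = density A - density B := by
  rw [density, density, density, ← expect_sub_distrib]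
  refine expect_congr rfl fun x _ ↦ ?_
  by_cases hB : x ∈ B
  · simp [hB, h hB]
  · by_cases hA : x ∈ A <;> simp [hA, hB]

lemma expect_indicator_range {j : X → Y} (hj : Injective j) (g : Y → ℝ) :
    𝔼 y, (Set.range j).indicator g y = Fintype.card X / Fintype.card Y * 𝔼 x, g (j x) := by
  classical
  have hsum : ∑ y, (Set.range j).indicator g y = ∑ x, g (j x) := by
    rw [← sum_image fun x _ x' _ h ↦ hj h, ← sum_indicator_subset g (subset_univ _)]
    simp
  rw [Fintype.expect_eq_sum_div_card, hsum, ← Fintype.card_mul_expect, mul_div_right_comm]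

lemma density_range [Nonempty X] {j : X → Y} (hj : Injective j) :
    density (Set.range j) = Fintype.card X / Fintype.card Y := by
  simp [density, expect_indicator_range hj]

lemma density_preimage_equiv (e : X ≃ Y) (A : Set Y) : density (e ⁻¹' A) = density A :=
  Fintype.expect_equiv e _ _ fun _ ↦ rfl

lemma expect_add_mul_sub [Nonempty X] (f : X → ℝ) (η κ : ℝ) :
    𝔼 x, (η + κ * (f x - η)) = η + κ * (𝔼 x, f x - η) := by
  rw [expect_add_distrib, ← mul_expect, expect_sub_distrib, Fintype.expect_const]

lemma expect_prod (f : X × Y → ℝ) : 𝔼 p, f p = 𝔼 x, 𝔼 y, f (x, y) := by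
  rw [← Finset.univ_product_univ, expect_product]

lemma expect_sum_arrow {ι κ : Type*} [Fintype ι] [Fintype κ] [DecidableEq ι] [DecidableEq κ]
    (f : (ι ⊕ κ → Y) → ℝ) : 𝔼 z, f z = 𝔼 u : ι → Y, 𝔼 v : κ → Y, f (Sum.elim u v) := by
  have h := Fintype.expect_equiv (Equiv.sumArrowEquivProdArrow ι κ Y) f
    (fun p ↦ f (Sum.elim p.1 p.2)) fun z ↦ congrArg f (Sum.elim_comp_inl_inr z).symm
  rw [h, expect_prod]

lemma expect_update {ι : Type*} [Fintype ι] [DecidableEq ι] (i : ι) (f : (ι → Y) → ℝ) :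
    𝔼 z, 𝔼 y, f (update z i y) = 𝔼 z, f z := by
  have swap : Involutive fun p : (ι → Y) × Y ↦ (update p.1 i p.2, p.1 i) := fun p ↦ by simp
  have h : 𝔼 p : (ι → Y) × Y, f (update p.1 i p.2) = 𝔼 p : (ι → Y) × Y, f p.1 :=
    Fintype.expect_equiv swap.toPerm _ _ fun _ ↦ rfl
  rw [expect_prod, expect_prod] at h
  rw [h]
  refine expect_congr rfl fun z _ ↦ ?_
  have : Nonempty Y := ⟨z i⟩
  simp only [Fintype.expect_const]

lemma expect_eval [Nonempty Y] {ι : Type*} [Fintype ι] [DecidableEq ι] (i : ι) (f : Y → ℝ) :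
    𝔼 z : ι → Y, f (z i) = 𝔼 y, f y := by
  rw [← expect_update i]
  simp only [update_self, Fintype.expect_const]

lemma exists_le_density_of_le_expect_density {Λ : Type*} [Finite Λ] {L : Λ → Set Y} {δ : ℝ}
    (hδ : 0 < δ) (hL : ∀ S : Set Y, δ / 2 ≤ density S → ∃ l, L l ⊆ S) :
    ∃ γ > 0, ∀ {Ω : Type*} [Fintype Ω] (A : Ω → Set Y), δ ≤ 𝔼 ω, density (A ω) →
      ∃ l, γ ≤ density {ω | L l ⊆ A ω} := by
  cases nonempty_fintype Λ
  refine ⟨δ / (2 * (Fintype.card Λ + 1)), by positivity, fun {Ω} _ A hA ↦ ?_⟩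
  by_contra! hlt
  have pointwise (ω : Ω) :
      density (A ω) ≤ δ / 2 + ∑ l, {ω | L l ⊆ A ω}.indicator (1 : Ω → ℝ) ω := by
    have hsum (l : Λ) : 0 ≤ {ω | L l ⊆ A ω}.indicator (1 : Ω → ℝ) ω :=
      Set.indicator_nonneg (fun _ _ ↦ zero_le_one) _
    by_cases hω : δ / 2 ≤ density (A ω)
    · obtain ⟨l, hl⟩ := hL _ hω
      have := single_le_sum (fun l _ ↦ hsum l) (mem_univ l)
      rw [Set.indicator_of_mem (show ω ∈ {ω | L l ⊆ A ω} from hl), Pi.one_apply] at this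
      linarith [density_le_one (A ω)]
    · linarith [sum_nonneg fun l (_ : l ∈ univ) ↦ hsum l]
  obtain hΩ | hΩ := isEmpty_or_nonempty Ω
  · simp only [univ_eq_empty, expect_empty] at hA
    exact hA.not_gt hδ
  have hle : δ ≤ δ / 2 + ∑ l, density {ω | L l ⊆ A ω} := by
    refine hA.trans ((expect_le_expect fun ω _ ↦ pointwise ω).trans_eq ?_)
    rw [expect_add_distrib, Fintype.expect_const, expect_sum_comm]
    rfl
  have hsum : ∑ l, density {ω | L l ⊆ A ω} ≤ Fintype.card Λ * (δ / (2 * (Fintype.card Λ + 1))) := by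
    rw [← nsmul_eq_mul]
    exact sum_le_card_nsmul _ _ _ fun l _ ↦ (hlt l).le
  have : Fintype.card Λ * (δ / (2 * (Fintype.card Λ + 1))) < δ / 2 := by
    rw [mul_div_assoc', div_lt_div_iff₀ (by positivity) two_pos]
    nlinarith
  linarith

end Averages

open Combinatorics

section Subspaces

variable {α σ τ ι : Type*}

lemma subspace_injective (V : Subspace σ α ι) : Injective V := fun w w' h ↦ by
  ext s
  obtain ⟨i, hi⟩ := V.proper s
  simpa only [Subspace.apply_inr hi] using congrFun h i

/-- The subspace `V ∘ W` of `ι → α` traced out by a subspace `W` of the parameter space of `V`. -/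
def compSubspace (V : Subspace τ α ι) (W : Subspace σ α τ) : Subspace σ α ι where
  idxFun i := (V.idxFun i).elim Sum.inl W.idxFun
  proper s := by
    obtain ⟨t, ht⟩ := W.proper s
    obtain ⟨i, hi⟩ := V.proper t
    exact ⟨i, by simp [hi, ht]⟩

@[simp]
lemma compSubspace_apply (V : Subspace τ α ι) (W : Subspace σ α τ) (w : σ → α) :
    compSubspace V W w = V (W w) := by
  ext i
  cases h : V.idxFun i <;> simp [compSubspace, Subspace.coe_apply, h]

/-- The line `V ∘ l` of `ι → α` traced out by a line `l` of the parameter space of `V`. -/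
def compLine (V : Subspace τ α ι) (l : Line α τ) : Line α ι where
  idxFun i := (V.idxFun i).elim some l.idxFun
  proper := by
    obtain ⟨t, ht⟩ := l.proper
    obtain ⟨i, hi⟩ := V.proper t
    exact ⟨i, by simp [hi, ht]⟩

@[simp]
lemma compLine_apply (V : Subspace τ α ι) (l : Line α τ) (a : α) :
    compLine V l a = V (l a) := by
  ext i
  cases h : V.idxFun i <;> simp [compLine, Subspace.coe_apply, h]

/-- The subspace obtained from `V` by renaming the letters of its fixed coordinates along `f`. -/
def mapSubspace {β : Type*} (f : α → β) (V : Subspace σ α ι) : Subspace σ β ι where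
  idxFun i := (V.idxFun i).map f id
  proper s := by
    obtain ⟨i, hi⟩ := V.proper s
    exact ⟨i, by simp [hi]⟩

lemma mapSubspace_apply {β : Type*} (f : α → β) (V : Subspace σ α ι) (w : σ → α) :
    mapSubspace f V (f ∘ w) = f ∘ V w := by
  ext i
  cases h : V.idxFun i <;> simp [mapSubspace, Subspace.coe_apply, h]

/-- The subspace `W × {v}`. -/
def horizontalSubspace {κ : Type*} (W : Subspace σ α ι) (v : κ → α) :
    Subspace σ α (ι ⊕ κ) where
  idxFun := Sum.elim W.idxFun (Sum.inl ∘ v)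
  proper s := by
    obtain ⟨i, hi⟩ := W.proper s
    exact ⟨Sum.inl i, hi⟩

@[simp]
lemma horizontalSubspace_apply {κ : Type*} (W : Subspace σ α ι) (v : κ → α) (w : σ → α) :
    horizontalSubspace W v w = Sum.elim (W w) v := by
  ext (i | i) <;> rfl

/-- The subspace `{v} × W`. -/
def verticalSubspace {κ : Type*} (v : κ → α) (W : Subspace σ α ι) :
    Subspace σ α (κ ⊕ ι) where
  idxFun := Sum.elim (Sum.inl ∘ v) W.idxFun
  proper s := by
    obtain ⟨i, hi⟩ := W.proper s
    exact ⟨Sum.inr i, hi⟩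

@[simp]
lemma verticalSubspace_apply {κ : Type*} (v : κ → α) (W : Subspace σ α ι) (w : σ → α) :
    verticalSubspace v W w = Sum.elim v (W w) := by
  ext (i | i) <;> rfl

/-- The subspace spanned by a line (moved by the new parameter) and a subspace on disjoint
coordinates. -/
def sumSubspace {κ : Type*} (l : Line α ι) (V : Subspace σ α κ) :
    Subspace (Option σ) α (ι ⊕ κ) where
  idxFun := Sum.elim (fun i ↦ (l.idxFun i).elim (Sum.inr none) Sum.inl)
    fun i ↦ (V.idxFun i).map id some
  proper := by
    rintro (_ | s)
    · obtain ⟨i, hi⟩ := l.proper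
      exact ⟨Sum.inl i, by simp [hi]⟩
    · obtain ⟨i, hi⟩ := V.proper s
      exact ⟨Sum.inr i, by simp [hi]⟩

lemma sumSubspace_apply {κ : Type*} (l : Line α ι) (V : Subspace σ α κ) (w : Option σ → α) :
    sumSubspace l V w = Sum.elim (l (w none)) (V fun s ↦ w (some s)) := by
  ext (i | i)
  · cases h : l.idxFun i <;> simp [sumSubspace, Subspace.coe_apply, h]
  · cases h : V.idxFun i <;> simp [sumSubspace, Subspace.coe_apply, h]

end Subspaces

section Multidimensional

variable {α : Type*} [Fintype α]

/-- The density Hales–Jewett property: in some finite dimension, every set of density at least `δ`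
of words over `α` contains a combinatorial line. -/
def DensityHJ (α : Type*) [Fintype α] (δ : ℝ) : Prop :=
  ∃ (ι : Type) (_ : Fintype ι) (_ : DecidableEq ι), ∀ A : Set (ι → α), δ ≤ density A →
    ∃ l : Line α ι, ∀ a, l a ∈ A

lemma DensityHJ.exists_le_density_line_of_le_expect {δ : ℝ} (hα : DensityHJ α (δ / 2))
    (hδ : 0 < δ) :
    ∃ (κ : Type) (_ : Fintype κ) (_ : DecidableEq κ), ∃ γ > 0, ∀ {Ω : Type*} [Fintype Ω]
      (A : Ω → Set (κ → α)), δ ≤ 𝔼 ω, density (A ω) →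
        ∃ l : Line α κ, γ ≤ density {ω | ∀ a, l a ∈ A ω} := by
  obtain ⟨κ, _, _, hκ⟩ := hα
  have : Finite (Line α κ) := .of_injective Line.idxFun fun _ _ ↦ Line.ext
  obtain ⟨γ, hγ, h⟩ := exists_le_density_of_le_expect_density
    (L := fun l : Line α κ ↦ Set.range l) hδ fun S hS ↦ (hκ S hS).imp fun _ ↦ Set.range_subset_iff.2
  simp only [Set.range_subset_iff] at h
  exact ⟨κ, inferInstance, inferInstance, γ, hγ, h⟩

lemma DensityHJ.exists_le_density_line [Nonempty α] {δ : ℝ} (hα : DensityHJ α (δ / 2))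
    (hδ : 0 < δ) :
    ∃ (κ : Type) (_ : Fintype κ) (_ : DecidableEq κ), ∃ γ > 0, ∀ {Ω : Type*} [Fintype Ω]
      (A : Ω → Set (κ → α)), (∀ x, δ ≤ density {ω | x ∈ A ω}) →
        ∃ l : Line α κ, γ ≤ density {ω | ∀ a, l a ∈ A ω} := by
  obtain ⟨κ, _, _, γ, hγ, h⟩ := hα.exists_le_density_line_of_le_expect hδ
  refine ⟨κ, inferInstance, inferInstance, γ, hγ, fun {Ω} _ A hA ↦ h A ?_⟩
  simp only [density]
  rw [expect_comm]
  exact le_expect univ_nonempty fun x _ ↦ hA x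

lemma exists_subspace_subset_of_densityHJ (hα : ∀ δ > 0, DensityHJ α δ) (σ : Type) [Finite σ] :
    ∀ δ > 0, ∃ (ι : Type) (_ : Fintype ι) (_ : DecidableEq ι), ∀ A : Set (ι → α),
      δ ≤ density A → ∃ V : Subspace σ α ι, Set.range V ⊆ A := by
  induction σ using Finite.induction_empty_option with
  | of_equiv e ih =>
    intro δ hδ
    obtain ⟨ι, _, _, hι⟩ := ih δ hδ
    refine ⟨ι, inferInstance, inferInstance, fun A hA ↦ ?_⟩
    obtain ⟨V, hV⟩ := hι A hA
    refine ⟨V.reindex e (.refl α) (.refl ι), Set.range_subset_iff.2 fun w ↦ ?_⟩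
    convert hV ⟨w ∘ e, rfl⟩ using 1
    ext i
    simp [Subspace.reindex_apply]
  | h_empty =>
    intro δ hδ
    refine ⟨PEmpty, inferInstance, inferInstance, fun A hA ↦ ?_⟩
    obtain ⟨x, hx⟩ := nonempty_of_density_pos (hδ.trans_le hA)
    refine ⟨⟨fun i ↦ i.elim, fun e ↦ e.elim⟩, Set.range_subset_iff.2 fun w ↦ ?_⟩
    rwa [Subsingleton.elim (Subspace.toFun _ w) x]
  | @h_option σ _ ih =>
    intro δ hδ
    obtain ⟨ι, _, _, γ, hγ, hline⟩ :=
      (hα (δ / 2) (by positivity)).exists_le_density_line_of_le_expect hδ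
    obtain ⟨κ, _, _, hκ⟩ := ih γ hγ
    refine ⟨ι ⊕ κ, inferInstance, inferInstance, fun A hA ↦ ?_⟩
    rw [density, expect_sum_arrow, expect_comm] at hA
    obtain ⟨l, hl⟩ := hline (fun v : κ → α ↦ {u : ι → α | Sum.elim u v ∈ A}) hA
    obtain ⟨V, hV⟩ := hκ _ hl
    refine ⟨sumSubspace l V, Set.range_subset_iff.2 fun w ↦ ?_⟩
    rw [sumSubspace_apply]
    exact hV ⟨_, rfl⟩ (w none)

end Multidimensional

section RandomSubspaces

universe u

variable {K : Type u} [Fintype K] [Nonempty K]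

lemma expect_sq_expect_eval {ι : Type*} [Fintype ι] [Nonempty ι] [DecidableEq ι] {g : K → ℝ}
    (hg : 𝔼 a, g a = 0) :
    𝔼 z : ι → K, (𝔼 i, g (z i)) ^ 2 = (𝔼 a, g a ^ 2) / Fintype.card ι := by
  have cov (i j : ι) :
      𝔼 z : ι → K, g (z i) * g (z j) = if i = j then 𝔼 a, g a ^ 2 else 0 := by
    split_ifs with hij
    · subst hij
      simp only [← sq]
      exact expect_eval i fun a ↦ g a ^ 2
    · rw [← expect_update i]
      simp only [update_self, update_of_ne (Ne.symm hij), ← expect_mul, hg, zero_mul,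
        expect_const_zero]
  calc 𝔼 z : ι → K, (𝔼 i, g (z i)) ^ 2
      = 𝔼 z : ι → K, 𝔼 i, 𝔼 j, g (z i) * g (z j) := by
        simp only [sq, expect_mul_expect]
    _ = 𝔼 i, 𝔼 j, 𝔼 z : ι → K, g (z i) * g (z j) := by
        rw [expect_comm]
        exact expect_congr rfl fun i _ ↦ expect_comm _ _ _
    _ = (𝔼 a, g a ^ 2) / Fintype.card ι := by
        simp only [cov, Fintype.expect_eq_sum_div_card (ι := ι), sum_ite_eq, mem_univ, if_true,
          sum_const, card_univ, nsmul_eq_mul]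
        field_simp

lemma expect_update_eq_expect_mul {ι : Type*} [Fintype ι] [DecidableEq ι] [DecidableEq K]
    (i : ι) (a : K) (f : (ι → K) → ℝ) :
    𝔼 y, f (update y i a) = 𝔼 y, f y * if y i = a then (Fintype.card K : ℝ) else 0 := by
  rw [← expect_update i (fun y ↦ f y * _)]
  simp only [update_self, mul_comm (f _), expect_boole_mul' fun b ↦ f (update _ i b)]

lemma neg_add_sq_div_le_mul {η f : ℝ} (hη : 0 < η) (hf : f = 0 ∨ f = 1) (h : ℝ) :
    -(η / 2 + h ^ 2 / (2 * η)) ≤ f * h := by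
  have hsq : η / 2 + h ^ 2 / (2 * η) + h = (h + η) ^ 2 / (2 * η) := by
    field_simp
    ring
  obtain rfl | rfl := hf
  · have : 0 ≤ η / 2 + h ^ 2 / (2 * η) := by positivity
    linarith
  · have : 0 ≤ (h + η) ^ 2 / (2 * η) := by positivity
    linarith

-- Overwriting a random letter multiplies the density of the law of the word by the number of
-- occurrences of `a` over its mean, and this factor is close to `1` in `L²`.
lemma exists_density_sub_le_expect_density_update {η : ℝ} (hη : 0 < η) :
    ∃ L > 0, ∀ (a : K) (A : Set (Fin L → K)),
      density A - η ≤ 𝔼 l, density {y | update y l a ∈ A} := by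
  classical
  obtain ⟨L, hL⟩ := exists_nat_ge (Fintype.card K / η ^ 2)
  have hL0 : 0 < (L : ℝ) := lt_of_lt_of_le (by positivity) hL
  refine ⟨L, by exact_mod_cast hL0, fun a A ↦ ?_⟩
  have : Nonempty (Fin L) := ⟨⟨0, by exact_mod_cast hL0⟩⟩
  let f : (Fin L → K) → ℝ := A.indicator 1
  let g : K → ℝ := fun b ↦ (if b = a then (Fintype.card K : ℝ) else 0) - 1
  have hg : 𝔼 b, g b = 0 := by
    have := expect_boole_mul' (fun _ ↦ (1 : ℝ)) a
    simp_all [g, expect_sub_distrib]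
  have hg2 : 𝔼 b, g b ^ 2 ≤ Fintype.card K := by
    have hsq (b : K) : g b ^ 2 =
        (if b = a then (Fintype.card K : ℝ) else 0) * (Fintype.card K - 2) + 1 := by
      simp only [g]
      split_ifs <;> ring
    simp only [hsq, expect_add_distrib, expect_boole_mul', Fintype.expect_const]
    linarith
  have hvar : 𝔼 y : Fin L → K, (𝔼 l, g (y l)) ^ 2 / (2 * η) ≤ η / 2 := by
    have hcard : (Fintype.card K : ℝ) ≤ L * η ^ 2 := (div_le_iff₀ (by positivity)).1 hL
    rw [← expect_div, expect_sq_expect_eval hg, Fintype.card_fin, div_div,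
      div_le_div_iff₀ (by positivity) two_pos]
    nlinarith
  have hdiff : 𝔼 l, density {y | update y l a ∈ A} - density A = 𝔼 y, f y * 𝔼 l, g (y l) := by
    simp only [mul_expect, g, mul_sub, mul_one, expect_sub_distrib, Fintype.expect_const,
      expect_comm univ univ fun y _ ↦ f y * _, ← expect_update_eq_expect_mul]
    rfl
  have hlow : 𝔼 y : Fin L → K, -(η / 2 + (𝔼 l, g (y l)) ^ 2 / (2 * η)) ≤
      𝔼 y, f y * 𝔼 l, g (y l) :=
    expect_le_expect fun y _ ↦
      neg_add_sq_div_le_mul hη (Set.indicator_eq_zero_or_self A 1 y) _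
  rw [expect_neg_distrib, expect_add_distrib, Fintype.expect_const] at hlow
  linarith

lemma exists_equidistributed_subspaces (Q : Type) [Finite Q] {η : ℝ} (hη : 0 < η) :
    ∃ (ι : Type) (_ : Fintype ι) (_ : DecidableEq ι) (Ω : Type u) (_ : Fintype Ω)
      (_ : Nonempty Ω) (V : Ω → Subspace Q K ι),
      ∀ (A : Set (ι → K)) (u : Q → K), density A - η ≤ density {ω | V ω u ∈ A} := by
  classical
  cases nonempty_fintype Q
  obtain ⟨L, hL0, hL⟩ := exists_density_sub_le_expect_density_update (K := Q → K) hη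
  let l₀ : Fin L := ⟨0, hL0⟩
  refine ⟨Fin L × Q, inferInstance, inferInstance, Fin L × (Fin L → Q → K), inferInstance,
    ⟨l₀, fun _ _ ↦ Classical.arbitrary K⟩,
    fun ω ↦ ⟨fun i ↦ if i.1 = ω.1 then Sum.inr i.2 else Sum.inl (ω.2 i.1 i.2),
      fun q ↦ ⟨(ω.1, q), if_pos rfl⟩⟩, fun A u ↦ ?_⟩
  convert hL u {y | uncurry y ∈ A} using 1
  · rw [← density_preimage_equiv (Equiv.curry (Fin L) Q K)]
    rfl
  · rw [density, expect_prod]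
    refine expect_congr rfl fun l _ ↦ expect_congr rfl fun y _ ↦ ?_
    have hpoint : (fun i : Fin L × Q ↦
        (if i.1 = l then Sum.inr i.2 else Sum.inl (y i.1 i.2) : K ⊕ Q).elim id u) =
        uncurry (update y l u) := by
      ext ⟨j, q⟩
      by_cases h : j = l <;> simp [h]
    exact congrArg (A.indicator 1) hpoint

end RandomSubspaces

section Insensitive

variable {α σ τ ι ρ : Type*}

/-- The word `v` with its letters `none` replaced by `c`. -/
def fill (c : Option α) (v : τ → Option α) : τ → Option α :=
  fun t ↦ (v t).or c

lemma fill_none (v : τ → Option α) : fill none v = v := by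
  ext1 t
  simp [fill]

lemma fill_fill (c : Option α) (v : τ → Option α) : fill c (fill c v) = fill c v := by
  ext1 t
  simp [fill, Option.or_assoc]

lemma fill_some (a : α) (v : τ → Option α) : fill (some a) v = some ∘ fun t ↦ (v t).getD a := by
  ext1 t
  cases h : v t <;> simp [fill, h]

lemma fill_sumElim (c : Option α) (u : ρ → Option α) (v : τ → Option α) :
    fill c (Sum.elim u v) = Sum.elim (fill c u) (fill c v) := by
  ext1 (i | i) <;> rfl

lemma fill_subspace_fill (c : Option α) (W : Subspace σ (Option α) τ) (w : σ → Option α) :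
    fill c (W (fill c w)) = fill c (W w) := by
  ext1 t
  cases h : W.idxFun t <;> simp [fill, Subspace.coe_apply, h, Option.or_assoc]

/-- A set of words is `a`-insensitive if exchanging letters `none` and `a` in a word does not change
its membership, that is, if membership only depends on the word with `none` replaced by `a`. -/
def IsInsensitive (a : α) (S : Set (τ → Option α)) : Prop :=
  ∀ v, fill (some a) v ∈ S ↔ v ∈ S

lemma IsInsensitive.preimage {a : α} {S : Set (τ → Option α)} (hS : IsInsensitive a S)
    (W : Subspace σ (Option α) τ) : IsInsensitive a (W ⁻¹' S) := fun w ↦ by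
  rw [Set.mem_preimage, ← hS, fill_subspace_fill, hS, Set.mem_preimage]

lemma IsInsensitive.sumElim_fill_mem {a : α} {S : Set (ρ ⊕ τ → Option α)}
    (hS : IsInsensitive a S) (u : ρ → Option α) (v : τ → Option α) :
    Sum.elim (fill (some a) u) (fill (some a) v) ∈ S ↔ Sum.elim u v ∈ S := by
  rw [← fill_sumElim, hS]

lemma IsInsensitive.slice {a : α} {S : Set (ρ ⊕ τ → Option α)} (hS : IsInsensitive a S)
    (v : τ → Option α) : IsInsensitive a {u | Sum.elim u v ∈ S} := fun u ↦
  (hS.sumElim_fill_mem _ v).symm.trans <| by rw [fill_fill, hS.sumElim_fill_mem]; rfl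

lemma IsInsensitive.slice_fill {a : α} {S : Set (ρ ⊕ τ → Option α)} (hS : IsInsensitive a S)
    (v : τ → Option α) : {u | Sum.elim u (fill (some a) v) ∈ S} = {u | Sum.elim u v ∈ S} :=
  Set.ext fun u ↦
    (hS.sumElim_fill_mem u _).symm.trans <| by rw [fill_fill, hS.sumElim_fill_mem]; rfl

end Insensitive

section InsensitiveIncrement

variable {α : Type*} [Fintype α]

lemma exists_subspace_subset_of_isInsensitive (hα : ∀ δ > 0, DensityHJ α δ) (a : α) (σ : Type)
    [Finite σ] {η : ℝ} (hη : 0 < η) :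
    ∃ (ρ : Type) (_ : Fintype ρ) (_ : DecidableEq ρ), ∀ S : Set (ρ → Option α),
      IsInsensitive a S → η ≤ density S → ∃ W : Subspace σ (Option α) ρ, Set.range W ⊆ S := by
  have : Nonempty α := ⟨a⟩
  obtain ⟨κ, _, _, hκ⟩ := exists_subspace_subset_of_densityHJ hα σ (η / 2) (by positivity)
  obtain ⟨ρ, _, _, Ω, _, _, V, hV⟩ := exists_equidistributed_subspaces (K := Option α) κ
    (half_pos hη)
  refine ⟨ρ, inferInstance, inferInstance, fun S hS hdens ↦ ?_⟩
  have havg : η / 2 ≤ 𝔼 ω, density {z : κ → α | V ω (some ∘ z) ∈ S} := by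
    simp only [density]
    rw [expect_comm]
    refine le_expect univ_nonempty fun z _ ↦ ?_
    exact (by linarith : η / 2 ≤ density S - η / 2).trans (hV S (some ∘ z))
  obtain ⟨ω, -, hω⟩ := exists_le_of_le_expect univ_nonempty havg
  obtain ⟨U, hU⟩ := hκ _ hω
  let W := compSubspace (V ω) (mapSubspace some U)
  refine ⟨W, Set.range_subset_iff.2 fun w ↦ ?_⟩
  rw [← Set.mem_preimage, ← hS.preimage, fill_some, Set.mem_preimage, compSubspace_apply,
    mapSubspace_apply]
  exact hU ⟨_, rfl⟩

/-- `g` has nonpositive mean on every `σ`-dimensional subspace contained in `S`. -/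
def NonposOnSubspaces (σ : Type) [Fintype σ] [DecidableEq σ] {K τ : Type*} [Fintype K]
    (S : Set (τ → K)) (g : (τ → K) → ℝ) : Prop :=
  ∀ W : Subspace σ K τ, Set.range W ⊆ S → 𝔼 w, g (W w) ≤ 0

section Slices

variable {σ : Type} [Fintype σ] [DecidableEq σ] {K ρ τ : Type*} [Fintype K]
  {S : Set (ρ ⊕ τ → K)} {g : (ρ ⊕ τ → K) → ℝ}

lemma NonposOnSubspaces.slice_left (h : NonposOnSubspaces σ S g) (v : τ → K) :
    NonposOnSubspaces σ {u | Sum.elim u v ∈ S} fun u ↦ g (Sum.elim u v) := fun W hW ↦ by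
  have hrange : Set.range (horizontalSubspace W v) ⊆ S := Set.range_subset_iff.2 fun w ↦ by
    rw [horizontalSubspace_apply]
    exact hW ⟨w, rfl⟩
  simpa only [horizontalSubspace_apply] using h _ hrange

lemma NonposOnSubspaces.slice_right (h : NonposOnSubspaces σ S g) (u : ρ → K) :
    NonposOnSubspaces σ {v | Sum.elim u v ∈ S} fun v ↦ g (Sum.elim u v) := fun W hW ↦ by
  have hrange : Set.range (verticalSubspace u W) ⊆ S := Set.range_subset_iff.2 fun w ↦ by
    rw [verticalSubspace_apply]
    exact hW ⟨w, rfl⟩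
  simpa only [verticalSubspace_apply] using h _ hrange

lemma NonposOnSubspaces.mono {S T : Set (τ → K)} {g : (τ → K) → ℝ}
    (h : NonposOnSubspaces σ T g) (hST : S ⊆ T) : NonposOnSubspaces σ S g :=
  fun W hW ↦ h W (hW.trans hST)

end Slices

/-- Inside an `a`-insensitive set `S` of words indexed by `τ`, the subspaces of dimension `σ`
control means up to a density `η` and a fraction `κ` of the remaining density of `S`. -/
def SubspacesControlMeans (a : α) (σ : Type) [Fintype σ] [DecidableEq σ] (τ : Type) [Fintype τ]
    [DecidableEq τ] (η κ : ℝ) : Prop :=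
  ∀ (S : Set (τ → Option α)) (g : (τ → Option α) → ℝ), IsInsensitive a S → (∀ x, g x ≤ 1) →
    NonposOnSubspaces σ S g → 𝔼 x, S.indicator g x ≤ η + κ * (density S - η)

variable {σ : Type} [Fintype σ] [DecidableEq σ]

lemma subspacesControlMeans_one (a : α) (τ : Type) [Fintype τ] [DecidableEq τ] (η : ℝ) :
    SubspacesControlMeans a σ τ η 1 := fun S g _ hg _ ↦ by
  rw [one_mul, add_sub_cancel]
  exact expect_le_expect fun x _ ↦ Set.indicator_le_indicator (hg x)

-- `R` is a subspace contained in `T`, or empty if there is none.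
lemma exists_removable_subset {ρ : Type} [Fintype ρ] [DecidableEq ρ] {a : α} {η : ℝ}
    (hη : 0 ≤ η) (hρ : ∀ S : Set (ρ → Option α), IsInsensitive a S → η ≤ density S →
      ∃ W : Subspace σ (Option α) ρ, Set.range W ⊆ S) (T : Set (ρ → Option α)) :
    ∃ R ⊆ T, (∀ g, NonposOnSubspaces σ T g → 𝔼 x, R.indicator g x ≤ 0) ∧
      (IsInsensitive a T → density (T \ R) ≤
        η + (1 - 1 / Fintype.card (ρ → Option α)) * (density T - η)) := by
  have hc : (0 : ℝ) < 1 / Fintype.card (ρ → Option α) := by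
    have : (0 : ℝ) < Fintype.card (ρ → Option α) := by exact_mod_cast Fintype.card_pos
    positivity
  by_cases hT : ∃ W : Subspace σ (Option α) ρ, Set.range W ⊆ T
  · obtain ⟨W, hW⟩ := hT
    refine ⟨Set.range W, hW, fun g hg ↦ ?_, fun _ ↦ ?_⟩
    · rw [expect_indicator_range (subspace_injective W)]
      exact mul_nonpos_of_nonneg_of_nonpos (by positivity) (hg W hW)
    · have hrange : 1 / Fintype.card (ρ → Option α) ≤ density (Set.range W) := by
        rw [density_range (subspace_injective W)]
        gcongr
        exact_mod_cast Fintype.card_pos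
      have := density_diff hW
      have := density_le_one T
      nlinarith
  · refine ⟨∅, Set.empty_subset T, fun g _ ↦ by simp, fun hins ↦ ?_⟩
    have : density T < η := by
      by_contra! hcon
      exact hT (hρ T hins hcon)
    rw [Set.sdiff_empty]
    nlinarith

lemma density_eq_expect_slice {ρ τ K : Type*} [Fintype ρ] [DecidableEq ρ] [Fintype τ]
    [DecidableEq τ] [Fintype K] (S : Set (ρ ⊕ τ → K)) :
    density S = 𝔼 v : τ → K, density {u : ρ → K | Sum.elim u v ∈ S} := by
  rw [density, expect_sum_arrow, expect_comm]
  rfl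

lemma expect_indicator_eq_expect_slices_add {ρ τ K : Type*} [Fintype ρ] [DecidableEq ρ]
    [Fintype τ] [DecidableEq τ] [Fintype K] {S : Set (ρ ⊕ τ → K)} {R : (τ → K) → Set (ρ → K)}
    (hR : ∀ v, R v ⊆ {u | Sum.elim u v ∈ S}) (g : (ρ ⊕ τ → K) → ℝ) :
    𝔼 x, S.indicator g x = 𝔼 v, 𝔼 u, (R v).indicator (fun u ↦ g (Sum.elim u v)) u +
      𝔼 u, 𝔼 v, {v | u ∈ {u | Sum.elim u v ∈ S} \ R v}.indicator (fun v ↦ g (Sum.elim u v)) v := by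
  have split (u : ρ → K) (v : τ → K) : S.indicator g (Sum.elim u v) =
      (R v).indicator (fun u ↦ g (Sum.elim u v)) u +
        {v | u ∈ {u | Sum.elim u v ∈ S} \ R v}.indicator (fun v ↦ g (Sum.elim u v)) v := by
    by_cases hu : u ∈ R v
    · have hmem : Sum.elim u v ∈ S := hR v hu
      simp [hu, hmem]
    · by_cases hS : Sum.elim u v ∈ S <;> simp [hu, hS]
  rw [expect_sum_arrow]
  simp only [split, expect_add_distrib]
  rw [expect_comm]

lemma SubspacesControlMeans.step {ρ τ : Type} [Fintype ρ] [DecidableEq ρ] [Fintype τ]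
    [DecidableEq τ] {a : α} {η κ : ℝ} (hη : 0 ≤ η) (hκ : 0 ≤ κ)
    (hρ : ∀ S : Set (ρ → Option α), IsInsensitive a S → η ≤ density S →
      ∃ W : Subspace σ (Option α) ρ, Set.range W ⊆ S)
    (hτ : SubspacesControlMeans a σ τ η κ) :
    SubspacesControlMeans a σ (ρ ⊕ τ) η (κ * (1 - 1 / Fintype.card (ρ → Option α))) := by
  intro S g hS hg hneg
  choose R hRsub hRneg hRdens using exists_removable_subset (σ := σ) hη hρ
  let T (v : τ → Option α) : Set (ρ → Option α) := {u | Sum.elim u v ∈ S}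
  let rest (u : ρ → Option α) : Set (τ → Option α) := {v | u ∈ T v \ R (T v)}
  have removed (v : τ → Option α) :
      𝔼 u, (R (T v)).indicator (fun u ↦ g (Sum.elim u v)) u ≤ 0 :=
    hRneg _ _ (hneg.slice_left v)
  have remaining (u : ρ → Option α) : 𝔼 v, (rest u).indicator (fun v ↦ g (Sum.elim u v)) v ≤
      η + κ * (density (rest u) - η) := by
    refine hτ _ _ (fun v ↦ ?_) (fun _ ↦ hg _) ((hneg.slice_right u).mono fun v hv ↦ hv.1)
    have hT : T (fill (some a) v) = T v := hS.slice_fill v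
    change u ∈ T (fill (some a) v) \ R (T (fill (some a) v)) ↔ u ∈ T v \ R (T v)
    rw [hT]
  have hdens : 𝔼 u, density (rest u) ≤
      η + (1 - 1 / Fintype.card (ρ → Option α)) * (density S - η) := by
    calc 𝔼 u, density (rest u) = 𝔼 v, density (T v \ R (T v)) := expect_comm _ _ _
      _ ≤ _ := expect_le_expect fun v _ ↦ hRdens _ (hS.slice v)
      _ = _ := by rw [expect_add_mul_sub, density_eq_expect_slice S]
  calc 𝔼 x, S.indicator g x
      = _ := expect_indicator_eq_expect_slices_add (fun v ↦ hRsub (T v)) g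
    _ ≤ 0 + 𝔼 u, (η + κ * (density (rest u) - η)) :=
        add_le_add (expect_le univ_nonempty fun v _ ↦ removed v)
          (expect_le_expect fun u _ ↦ remaining u)
    _ = η + κ * (𝔼 u, density (rest u) - η) := by rw [zero_add, expect_add_mul_sub]
    _ ≤ η + κ * (1 - 1 / Fintype.card (ρ → Option α)) * (density S - η) := by
        rw [mul_assoc]
        gcongr
        linarith

lemma exists_subspace_half_le_expect (hα : ∀ δ > 0, DensityHJ α δ) (a : α) {β : ℝ}
    (hβ : 0 < β) :
    ∃ (τ : Type) (_ : Fintype τ) (_ : DecidableEq τ), ∀ (S : Set (τ → Option α))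
      (g : (τ → Option α) → ℝ), IsInsensitive a S → (∀ x, g x ≤ 1) →
      β ≤ 𝔼 x, S.indicator g x → ∃ W : Subspace σ (Option α) τ, β / 2 ≤ 𝔼 w, g (W w) := by
  obtain ⟨ρ, _, _, hρ⟩ := exists_subspace_subset_of_isInsensitive hα a σ
    (η := β / 8) (by positivity)
  set q : ℝ := 1 - 1 / Fintype.card (ρ → Option α)
  have hcard : (1 : ℝ) ≤ Fintype.card (ρ → Option α) := by exact_mod_cast Fintype.card_pos
  have hq0 : 0 ≤ q := sub_nonneg.2 (div_le_one_of_le₀ hcard (by positivity))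
  have hq1 : q < 1 := sub_lt_self _ (by positivity)
  have iterate (r : ℕ) : ∃ (τ : Type) (_ : Fintype τ) (_ : DecidableEq τ),
      SubspacesControlMeans a σ τ (β / 8) (q ^ r) := by
    induction r with
    | zero =>
      exact ⟨Empty, inferInstance, inferInstance, pow_zero q ▸ subspacesControlMeans_one a _ _⟩
    | succ r ih =>
      obtain ⟨τ, _, _, hτ⟩ := ih
      exact ⟨ρ ⊕ τ, inferInstance, inferInstance,
        pow_succ q r ▸ hτ.step (by positivity) (by positivity) hρ⟩
  obtain ⟨r, hr⟩ := exists_pow_lt_of_lt_one (by positivity : 0 < β / 8) hq1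
  obtain ⟨τ, _, _, hτ⟩ := iterate r
  refine ⟨τ, inferInstance, inferInstance, fun S g hS hg hβS ↦ ?_⟩
  by_contra! hlt
  have hcontrol := hτ S (fun x ↦ g x - β / 2) hS (fun x ↦ by linarith [hg x]) fun W _ ↦ by
    rw [expect_sub_distrib, Fintype.expect_const]
    linarith [hlt W]
  have hsub : 𝔼 x, S.indicator (fun x ↦ g x - β / 2) x =
      𝔼 x, S.indicator g x - density S * (β / 2) := by
    rw [density, expect_mul, ← expect_sub_distrib]
    refine expect_congr rfl fun x _ ↦ ?_
    by_cases hx : x ∈ S <;> simp [hx]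
  have := density_le_one S
  have := density_nonneg S
  have : 0 ≤ q ^ r := by positivity
  nlinarith

lemma exists_subspace_expect_pos (hα : ∀ δ > 0, DensityHJ α δ) (s : Finset α) :
    ∀ {β : ℝ}, 0 < β → ∃ (τ : Type) (_ : Fintype τ) (_ : DecidableEq τ),
      ∀ (S : α → Set (τ → Option α)) (g : (τ → Option α) → ℝ),
        (∀ a ∈ s, IsInsensitive a (S a)) → (∀ x, g x ≤ 1) →
        β ≤ 𝔼 x, (⋂ a ∈ s, S a).indicator g x →
        ∃ W : Subspace σ (Option α) τ, 0 < 𝔼 w, g (W w) := by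
  classical
  induction s using Finset.induction_on with
  | empty =>
    intro β hβ
    refine ⟨σ, inferInstance, inferInstance, fun S g _ _ h ↦ ⟨default, hβ.trans_le ?_⟩⟩
    simp only [notMem_empty, Set.iInter_of_empty, Set.iInter_univ, Set.indicator_univ] at h
    exact h
  | insert a s _ ih =>
    intro β hβ
    obtain ⟨τ₁, _, _, h₁⟩ := ih (half_pos hβ)
    obtain ⟨τ, _, _, h₂⟩ := exists_subspace_half_le_expect (σ := τ₁) hα a hβ
    refine ⟨τ, inferInstance, inferInstance, fun S g hS hg hβS ↦ ?_⟩
    obtain ⟨W, hW⟩ := h₂ (S a) ((⋂ b ∈ s, S b).indicator g) (hS a (mem_insert_self a s))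
      (fun x ↦ Set.indicator_apply_le' (fun _ ↦ hg x) fun _ ↦ zero_le_one) (by
        rwa [Set.indicator_indicator, ← set_biInter_insert])
    obtain ⟨U, hU⟩ := h₁ (fun b ↦ W ⁻¹' S b) (g ∘ W)
      (fun b hb ↦ (hS b (mem_insert_of_mem hb)).preimage W) (fun _ ↦ hg _) (by
        simpa only [← Set.preimage_iInter, Set.indicator_comp_right] using hW)
    exact ⟨compSubspace W U, by simpa only [compSubspace_apply, comp_apply] using hU⟩

end InsensitiveIncrement

section TagLine

variable {α κ τ : Type*}

/-- The line `c ↦ (c, v with its letters none replaced by c)` through `(none, v)`. -/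
def tagLine (v : τ → Option α) : Line (Option α) (Option τ) where
  idxFun o := o.elim none fun t ↦ (v t).map some
  proper := ⟨none, rfl⟩

lemma tagLine_apply (v : τ → Option α) (c : Option α) :
    tagLine v c = fun o ↦ o.elim c (fill c v) := by
  ext1 (_ | t)
  · rfl
  · cases h : v t <;> simp [tagLine, fill, Line.coe_apply, h]

lemma tagLine_fill (v : τ → Option α) (a : α) :
    tagLine (fill (some a) v) (some a) = tagLine v (some a) := by
  rw [tagLine_apply, tagLine_apply, fill_fill]

/-- The word `z` together with the words `w j` in which the letter `z j` replaces `none`. -/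
def fillBlocks (w : κ → τ → Option α) (z : κ → Option α) :
    (κ × τ) ⊕ κ → Option α :=
  Sum.elim (fun q ↦ fill (z q.1) (w q.1) q.2) z

lemma exists_subspace_tagLine [DecidableEq κ] {l : Line (Option α) κ} {j : κ}
    (hj : l.idxFun j = none) (w : κ → τ → Option α) :
    ∃ N : Subspace (Option τ) (Option α) ((κ × τ) ⊕ κ),
      ∀ v c, N (tagLine v c) = fillBlocks (update w j v) (l c) := by
  let letter (i : κ) : Option α ⊕ Option τ := (l.idxFun i).elim (Sum.inr none) Sum.inl
  have hletter (v : τ → Option α) (c : Option α) (i : κ) :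
      (letter i).elim id (tagLine v c) = l c i := by
    cases h : l.idxFun i <;> simp [letter, tagLine_apply, Line.coe_apply, h]
  let block (q : κ × τ) : Option α ⊕ Option τ :=
    if q.1 = j then Sum.inr (some q.2) else (w q.1 q.2).elim (letter q.1) (Sum.inl ∘ some)
  refine ⟨⟨Sum.elim block letter, ?_⟩, fun v c ↦ ?_⟩
  · rintro (_ | t)
    · exact ⟨Sum.inr j, by simp [letter, hj]⟩
    · exact ⟨Sum.inl (j, t), by simp [block]⟩
  · ext1 (⟨i, t⟩ | i)
    · change (block (i, t)).elim id (tagLine v c) = fill (l c i) (update w j v i) t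
      by_cases hi : i = j
      · subst hi
        simp [block, tagLine_apply, Line.coe_apply, hj]
      · cases h : w i t <;> simp [block, fill, hi, h, hletter]
    · exact hletter v c i

end TagLine

section Increment

variable {α : Type*} [Fintype α]

lemma sum_erase_univ_indicator_cell [DecidableEq α] {X : Type*} (D : α → Set X) (g : X → ℝ)
    (x : X) :
    ∑ s ∈ univ.erase (univ : Finset α), (⋂ a, {y | y ∈ D a ↔ a ∈ s}).indicator g x =
      (⋂ a, D a)ᶜ.indicator g x := by
  classical
  have hcell (s : Finset α) :
      x ∈ ⋂ a, {y | y ∈ D a ↔ a ∈ s} ↔ s = univ.filter fun a ↦ x ∈ D a := by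
    simp [Finset.ext_iff, iff_comm]
  have hall : x ∈ (⋂ a, D a)ᶜ ↔ (univ.filter fun a ↦ x ∈ D a) ≠ univ := by
    simp [Finset.ext_iff]
  simp only [Set.indicator_apply, hcell, hall, sum_ite_eq', mem_erase, mem_univ, and_true]

lemma exists_subspace_le_density_of_correlation {σ τ : Type} [Fintype σ] [DecidableEq σ]
    [Fintype τ] [DecidableEq τ] {β δ : ℝ} (hβ : 0 < β) (hδ : 0 ≤ δ)
    (hτ : ∀ (S : α → Set (τ → Option α)) (g : (τ → Option α) → ℝ),
      (∀ a, IsInsensitive a (S a)) → (∀ x, g x ≤ 1) → β ≤ 𝔼 x, (⋂ a, S a).indicator g x →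
      ∃ W : Subspace σ (Option α) τ, 0 < 𝔼 w, g (W w))
    {A : Set (τ → Option α)} {D : α → Set (τ → Option α)} (hD : ∀ a, IsInsensitive a (D a))
    (hAD : Disjoint A (⋂ a, D a))
    (hcorr : δ + Fintype.card (Finset α) * β ≤ density A + δ * density (⋂ a, D a)) :
    ∃ W : Subspace σ (Option α) τ, δ ≤ density (W ⁻¹' A) := by
  classical
  let g : (τ → Option α) → ℝ := fun v ↦ A.indicator 1 v - δ
  have partition (v : τ → Option α) : ∑ s ∈ univ.erase univ,
      (⋂ a, {v | v ∈ D a ↔ a ∈ s}).indicator g v = g v + δ * (⋂ a, D a).indicator 1 v := by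
    rw [sum_erase_univ_indicator_cell]
    by_cases hv : v ∈ ⋂ a, D a
    · have hvA : v ∉ A := fun h ↦ hAD.le_bot ⟨h, hv⟩
      rw [Set.indicator_of_mem hv, Set.indicator_of_notMem (Set.notMem_compl_iff.2 hv)]
      simp [g, hvA]
    · rw [Set.indicator_of_notMem hv, Set.indicator_of_mem (Set.mem_compl hv), mul_zero, add_zero]
  have hsum : ∑ _s ∈ univ.erase (univ : Finset α), β <
      ∑ s ∈ univ.erase univ, 𝔼 v, (⋂ a, {v | v ∈ D a ↔ a ∈ s}).indicator g v := by
    have hlt : ((univ.erase (univ : Finset α)).card : ℝ) < Fintype.card (Finset α) := by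
      exact_mod_cast card_erase_lt_of_mem (mem_univ _)
    rw [← expect_sum_comm, sum_const, nsmul_eq_mul]
    simp only [partition, g, expect_add_distrib, expect_sub_distrib, Fintype.expect_const,
      ← mul_expect]
    change _ < density A - δ + δ * density (⋂ a, D a)
    nlinarith
  obtain ⟨s, -, hs⟩ := exists_lt_of_sum_lt hsum
  have hg (v : τ → Option α) : g v ≤ 1 := by
    have : A.indicator 1 v ≤ (1 : ℝ) :=
      Set.indicator_apply_le' (fun _ ↦ le_rfl) fun _ ↦ zero_le_one
    linarith
  obtain ⟨W, hW⟩ := hτ _ g (fun a v ↦ iff_congr (hD a v) Iff.rfl) hg hs.le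
  refine ⟨W, ?_⟩
  rw [expect_sub_distrib, Fintype.expect_const] at hW
  exact (sub_pos.1 hW).le

lemma exists_subspace_correlation [Nonempty α] (hα : ∀ δ > 0, DensityHJ α δ) {δ₀ : ℝ}
    (hδ₀ : 0 < δ₀) :
    ∃ θ > 0, ∀ (τ : Type) [Fintype τ] [DecidableEq τ] {η : ℝ}, 0 < η → η ≤ δ₀ / 2 →
      ∃ (ι : Type) (_ : Fintype ι) (_ : DecidableEq ι), ∀ {A : Set (ι → Option α)} {c : ℝ},
        0 ≤ c → δ₀ ≤ density A → ∃ N : Subspace (Option τ) (Option α) ι,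
          density A - η + c * θ ≤ density {v | N (tagLine v none) ∈ A} +
            c * density {v | ∀ a, N (tagLine v (some a)) ∈ A} := by
  obtain ⟨κ, _, _, θ, hθ, hκ⟩ := (hα (δ₀ / 2 / 2) (by positivity)).exists_le_density_line
    (half_pos hδ₀)
  refine ⟨θ, hθ, fun τ _ _ η hη hηδ ↦ ?_⟩
  obtain ⟨ι, _, _, Ω, _, _, V, hV⟩ := exists_equidistributed_subspaces (K := Option α)
    ((κ × τ) ⊕ κ) hη
  refine ⟨ι, inferInstance, inferInstance, fun {A c} hc hA ↦ ?_⟩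
  let point (p : Ω × (κ → τ → Option α)) (z : κ → Option α) := V p.1 (fillBlocks p.2 z)
  have equidist (z : κ → Option α) : density A - η ≤ density {p | point p z ∈ A} := by
    rw [density, density, expect_prod, expect_comm, ← density]
    exact le_expect univ_nonempty fun w _ ↦ hV A (fillBlocks w z)
  obtain ⟨l, hl⟩ := hκ (fun p ↦ {z : κ → α | point p (some ∘ z) ∈ A}) fun z ↦
    (by linarith : δ₀ / 2 ≤ density A - η).trans (equidist (some ∘ z))
  simp only [Set.mem_ofPred_eq, ← Line.map_apply] at hl
  obtain ⟨j, hj⟩ := l.proper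
  have hmap : (l.map some).idxFun j = none := by simp [Line.map, hj]
  let f (p : Ω × (κ → τ → Option α)) : ℝ :=
    {p | point p (l.map some none) ∈ A}.indicator 1 p +
      c * {p | ∀ a, point p (l.map some (some a)) ∈ A}.indicator 1 p
  have hf : density A - η + c * θ ≤ 𝔼 ω, 𝔼 w, 𝔼 v, f (ω, update w j v) := by
    have resample (ω : Ω) : 𝔼 w, 𝔼 v, f (ω, update w j v) = 𝔼 w, f (ω, w) :=
      expect_update j fun w ↦ f (ω, w)
    simp only [resample, ← expect_prod]
    rw [expect_add_distrib, ← mul_expect]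
    exact add_le_add (equidist _) (mul_le_mul_of_nonneg_left hl hc)
  obtain ⟨ω, -, hω⟩ := exists_le_of_le_expect univ_nonempty hf
  obtain ⟨w, -, hw⟩ := exists_le_of_le_expect univ_nonempty hω
  obtain ⟨N, hN⟩ := exists_subspace_tagLine hmap w
  refine ⟨compSubspace (V ω) N, ?_⟩
  simp only [compSubspace_apply, hN]
  simp only [f, expect_add_distrib, ← mul_expect] at hw
  exact hw

/-- The subspace of `Option τ → K` of the words whose letter at `none` is `x`. -/
def fixNone {K : Type*} (τ : Type*) (x : K) : Subspace τ K (Option τ) where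
  idxFun o := o.elim (Sum.inl x) Sum.inr
  proper t := ⟨some t, rfl⟩

lemma fixNone_apply {K τ : Type*} (x : K) (v : τ → K) : fixNone τ x v = fun o ↦ o.elim x v := by
  ext1 (_ | t) <;> rfl

lemma exists_densityHJ_option_of_add [Nonempty α] (hα : ∀ δ > 0, DensityHJ α δ) {δ₀ : ℝ}
    (hδ₀ : 0 < δ₀) :
    ∃ γ > 0, ∀ δ, δ₀ ≤ δ → DensityHJ (Option α) (δ + γ) → DensityHJ (Option α) δ := by
  obtain ⟨θ, hθ, hcorr⟩ := exists_subspace_correlation hα hδ₀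
  set γ := δ₀ * θ / 4
  have hγ : 0 < γ := by positivity
  refine ⟨γ, hγ, fun δ hδ ⟨σ, _, _, hσ⟩ ↦ ?_⟩
  have hcard : (0 : ℝ) < Fintype.card (Finset α) := by exact_mod_cast Fintype.card_pos
  obtain ⟨τ, _, _, hτ⟩ := exists_subspace_expect_pos (σ := σ) hα univ (div_pos hγ hcard)
  obtain ⟨ι, _, _, hι⟩ := hcorr τ (lt_min hγ (half_pos hδ₀)) (min_le_right γ _)
  refine ⟨ι, inferInstance, inferInstance, fun A hA ↦ ?_⟩
  obtain ⟨N, hN⟩ := hι (add_nonneg (hδ₀.le.trans hδ) hγ.le) (hδ.trans hA)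
  by_cases hline : ∃ v, ∀ c, N (tagLine v c) ∈ A
  · obtain ⟨v, hv⟩ := hline
    exact ⟨compLine N (tagLine v), fun c ↦ by simpa only [compLine_apply] using hv c⟩
  let D (a : α) : Set (τ → Option α) := {v | N (tagLine v (some a)) ∈ A}
  have hdisj : Disjoint {v | N (tagLine v none) ∈ A} (⋂ a, D a) :=
    Set.disjoint_left.2 fun v hnone hsome ↦
      hline ⟨v, Option.forall.2 ⟨hnone, Set.mem_iInter.1 hsome⟩⟩
  obtain ⟨W, hW⟩ := exists_subspace_le_density_of_correlation (δ := δ + γ)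
    (div_pos hγ hcard) (by linarith) (by simpa using hτ)
    (fun a v ↦ by simp only [D, Set.mem_ofPred_eq, tagLine_fill]) hdisj (by
      rw [mul_div_cancel₀ _ hcard.ne', ← Set.ofPred_forall]
      have : min γ (δ₀ / 2) ≤ γ := min_le_left _ _
      have : 4 * γ = δ₀ * θ := by ring
      nlinarith)
  obtain ⟨l, hl⟩ := hσ _ hW
  refine ⟨compLine (compSubspace N (compSubspace (fixNone τ none) W)) l, fun c ↦ ?_⟩
  simpa [fixNone_apply, tagLine_apply, fill_none] using hl c

lemma densityHJ_option [Nonempty α] (hα : ∀ δ > 0, DensityHJ α δ) :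
    ∀ δ > 0, DensityHJ (Option α) δ := fun δ₀ hδ₀ ↦ by
  obtain ⟨γ, hγ, hadd⟩ := exists_densityHJ_option_of_add hα hδ₀
  have descend (m : ℕ) : ∀ δ, δ₀ ≤ δ → 1 < δ + m * γ → DensityHJ (Option α) δ := by
    induction m with
    | zero =>
      intro δ _ hδ
      exact ⟨Unit, inferInstance, inferInstance, fun A hA ↦ absurd hA <| not_le.2 <|
        (density_le_one A).trans_lt (by simpa using hδ)⟩
    | succ m ih =>
      intro δ hδ hm
      refine hadd δ hδ (ih _ (by linarith) ?_)
      push_cast at hm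
      linarith
  obtain ⟨m, hm⟩ := exists_nat_gt (1 / γ)
  rw [div_lt_iff₀ hγ] at hm
  exact descend m δ₀ le_rfl (by linarith)

lemma densityHJ_of_equiv {β : Type*} [Fintype β] (e : α ≃ β) {δ : ℝ} :
    DensityHJ α δ → DensityHJ β δ := fun ⟨ι, _, _, hι⟩ ↦ by
  refine ⟨ι, inferInstance, inferInstance, fun A hA ↦ ?_⟩
  rw [← density_preimage_equiv ((Equiv.refl ι).arrowCongr e)] at hA
  obtain ⟨l, hl⟩ := hι _ hA
  refine ⟨l.map e, fun b ↦ ?_⟩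
  obtain ⟨a, rfl⟩ := e.surjective b
  rw [Line.map_apply]
  exact hl a

lemma densityHJ_of_subsingleton {β : Type*} [Fintype β] [Subsingleton β] {δ : ℝ} (hδ : 0 < δ) :
    DensityHJ β δ := by
  refine ⟨Unit, inferInstance, inferInstance, fun A hA ↦ ?_⟩
  obtain ⟨x, hx⟩ := nonempty_of_density_pos (hδ.trans_le hA)
  exact ⟨⟨fun _ ↦ none, (), rfl⟩, fun a ↦ by rwa [Subsingleton.elim (Line.toFun _ a) x]⟩

theorem densityHJ (α : Type*) [Fintype α] : ∀ δ > 0, DensityHJ α δ := by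
  refine Fintype.induction_empty_option (P := fun α _ ↦ ∀ δ > 0, DensityHJ α δ)
    (fun α β _ e ih δ hδ ↦ ?_) (fun _ ↦ densityHJ_of_subsingleton) (fun α _ ih ↦ ?_) α
  · let _ : Fintype α := .ofEquiv β e.symm
    exact densityHJ_of_equiv e (ih δ hδ)
  · obtain hα | hα := isEmpty_or_nonempty α
    · exact fun _ ↦ densityHJ_of_subsingleton
    · exact densityHJ_option ih

end Increment

section Varnavides

variable {V : Type*} [AddCommGroup V]

lemma expect_add_right [Fintype V] (c : V) (f : V → ℝ) : 𝔼 z, f (z + c) = 𝔼 z, f z :=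
  Fintype.expect_equiv (Equiv.addRight c) _ _ fun _ ↦ rfl

lemma expect_sum_of_nonempty [Fintype V] {ι : Type*} [Fintype ι] [DecidableEq ι] {s : Finset ι}
    (hs : s.Nonempty) (f : V → ℝ) : 𝔼 v : ι → V, f (∑ i ∈ s, v i) = 𝔼 y, f y := by
  obtain ⟨i, hi⟩ := hs
  rw [← expect_update i]
  simp only [sum_update_of_mem hi, expect_add_right, Fintype.expect_const]

lemma line_sum_smul {R : Type*} [Ring R] [Module R V] {ι : Type*} [Fintype ι] (l : Line R ι)
    (v : ι → V) (a : R) :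
    ∑ i, l a i • v i = ∑ i, l 0 i • v i + a • ∑ i with l.idxFun i = none, v i := by
  rw [sum_filter, smul_sum, ← sum_add_distrib]
  refine sum_congr rfl fun i _ ↦ ?_
  cases h : l.idxFun i <;> simp [h]

lemma exists_le_expect_density_line_subset (R : Type*) [Ring R] [Finite R] {ε : ℝ} (hε : 0 < ε) :
    ∃ γ > 0, ∀ {V : Type*} [AddCommGroup V] [Module R V] [Fintype V] (B : Set V),
      ε ≤ density B → γ ≤ 𝔼 z : V, density {y | ∀ a : R, z + a • y ∈ B} := by
  cases nonempty_fintype R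
  obtain ⟨ι, _, _, γ, hγ, h⟩ := (densityHJ R (ε / 2) (half_pos hε)).exists_le_density_line hε
  refine ⟨γ, hγ, fun {V} _ _ _ B hB ↦ ?_⟩
  obtain ⟨l, hl⟩ := h (fun p : (ι → V) × V ↦ {x | p.2 + ∑ i, x i • p.1 i ∈ B}) fun x ↦ by
    refine hB.trans_eq ?_
    change _ = 𝔼 p : (ι → V) × V, B.indicator (1 : V → ℝ) (p.2 + ∑ i, x i • p.1 i)
    simp only [expect_prod, expect_add_right, Fintype.expect_const, density]
  refine hl.trans_eq ?_
  obtain ⟨i, hi⟩ := l.proper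
  let f (z y : V) : ℝ := {y | ∀ a : R, z + a • y ∈ B}.indicator 1 y
  let base (v : ι → V) : V := ∑ i, l 0 i • v i
  let dir (v : ι → V) : V := ∑ i with l.idxFun i = none, v i
  have hpoint (v : ι → V) (z : V) (a : R) :
      z + ∑ i, l a i • v i = z + base v + a • dir v := by rw [line_sum_smul, add_assoc]
  calc density {p : (ι → V) × V | ∀ a, p.2 + ∑ i, l a i • p.1 i ∈ B}
      = 𝔼 v : ι → V, 𝔼 z, f (z + base v) (dir v) := by
        rw [density, expect_prod]
        refine expect_congr rfl fun v _ ↦ expect_congr rfl fun z _ ↦ ?_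
        simp only [hpoint]
        rfl
    _ = 𝔼 v, 𝔼 z, f z (dir v) :=
        expect_congr rfl fun v _ ↦ expect_add_right _ fun z ↦ f z (dir v)
    _ = 𝔼 z, 𝔼 y, f z y := by
        rw [expect_comm]
        exact expect_congr rfl fun z _ ↦ expect_sum_of_nonempty ⟨i, by simp [hi]⟩ (f z)

end Varnavides

section Shattering

variable {ι : Type*}

/-- A set of partial Boolean functions shatters `J` if it realizes every pattern on `J`. -/
def IsShattered (P : Set (ι → Option Bool)) (J : Finset ι) : Prop :=
  ∀ f : ι → Bool, ∃ v ∈ P, ∀ i ∈ J, v i = some (f i)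

lemma IsShattered.mono {P Q : Set (ι → Option Bool)} {J : Finset ι} (h : IsShattered P J)
    (hPQ : P ⊆ Q) : IsShattered Q J :=
  fun f ↦ (h f).imp fun _ hv ↦ ⟨hPQ hv.1, hv.2⟩

lemma IsShattered.insert [DecidableEq ι] {P : Set (ι → Option Bool)} {J : Finset ι} {i : ι}
    (h : ∀ b, IsShattered {v ∈ P | v i = some b} J) : IsShattered P (insert i J) := fun f ↦ by
  obtain ⟨v, ⟨hv, hi⟩, hJ⟩ := h (f i) f
  exact ⟨v, hv, by simpa [hi] using hJ⟩

open scoped Classical in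
/-- The sum of `s ^ #J` over the sets `J ⊆ I` shattered by `P`. -/
noncomputable def shatterSum (s : ℝ) (P : Set (ι → Option Bool)) (I : Finset ι) : ℝ :=
  ∑ J ∈ I.powerset, if IsShattered P J then s ^ #J else 0

lemma shatterSum_add_le [DecidableEq ι] {s : ℝ} (hs : 0 ≤ s) (P : Set (ι → Option Bool))
    {I : Finset ι} {i : ι} (hi : i ∉ I) :
    (1 - s) * shatterSum s P I + s * ∑ b, shatterSum s {v ∈ P | v i = some b} I ≤
      shatterSum s P (insert i I) := by
  simp only [shatterSum, Fintype.sum_bool, sum_powerset_insert hi, mul_sum, ← sum_add_distrib]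
  refine sum_le_sum fun J hJ ↦ ?_
  have hcard : #(insert i J) = #J + 1 := card_insert_of_notMem fun h ↦ hi (mem_powerset.1 hJ h)
  have hsub (b : Bool) : IsShattered {v ∈ P | v i = some b} J → IsShattered P J :=
    fun h ↦ h.mono (Set.sep_subset _ _)
  have : 0 ≤ s ^ #J := by positivity
  have : 0 ≤ s * s ^ #J := by positivity
  rw [hcard, pow_succ']
  by_cases htrue : IsShattered {v ∈ P | v i = some true} J <;>
    by_cases hfalse : IsShattered {v ∈ P | v i = some false} J
  · have hboth : IsShattered P (insert i J) := .insert (Bool.forall_bool.2 ⟨hfalse, htrue⟩)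
    simp only [htrue, hfalse, hsub _ htrue, hboth, if_true]
    linarith
  · simp only [htrue, hfalse, hsub _ htrue, if_true, if_false]
    split_ifs <;> linarith
  · simp only [htrue, hfalse, hsub _ hfalse, if_true, if_false]
    split_ifs <;> linarith
  · simp only [htrue, hfalse, if_false]
    split_ifs <;> linarith

/-- The largest agreement weight of an element of `P` with `x` on `I`, where an agreement counts as
a factor `1 + s` and a disagreement as a factor `1 - s`. -/
noncomputable def maxAgreement (s : ℝ) (P : Set (ι → Option Bool)) (I : Finset ι) (x : ι → Bool) :
    ℝ :=
  ⨆ v : P, ∏ i ∈ I, if v.1 i = some (x i) then 1 + s else 1 - s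

section MaxAgreement

variable {s : ℝ} {P : Set (ι → Option Bool)} {I : Finset ι}

lemma prod_agreement_nonneg (hs : 0 ≤ s) (hs1 : s ≤ 1) (v : ι → Option Bool) (x : ι → Bool) :
    0 ≤ ∏ i ∈ I, if v i = some (x i) then 1 + s else 1 - s :=
  prod_nonneg fun i _ ↦ by split_ifs <;> linarith

lemma maxAgreement_nonneg (hs : 0 ≤ s) (hs1 : s ≤ 1) (x : ι → Bool) :
    0 ≤ maxAgreement s P I x :=
  Real.iSup_nonneg fun _ ↦ prod_agreement_nonneg hs hs1 _ _

lemma prod_le_maxAgreement [Finite ι] {v : ι → Option Bool} (hv : v ∈ P) (x : ι → Bool) :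
    ∏ i ∈ I, (if v i = some (x i) then 1 + s else 1 - s) ≤ maxAgreement s P I x :=
  le_ciSup (f := fun v : P ↦ ∏ i ∈ I, if v.1 i = some (x i) then 1 + s else 1 - s)
    (Set.finite_range _).bddAbove ⟨v, hv⟩

variable [DecidableEq ι]

lemma maxAgreement_update {i : ι} (hi : i ∉ I) (x : ι → Bool) (b : Bool) :
    maxAgreement s P I (update x i b) = maxAgreement s P I x := by
  refine iSup_congr fun v ↦ prod_congr rfl fun j hj ↦ ?_
  rw [update_of_ne (ne_of_mem_of_not_mem hj hi)]

lemma maxAgreement_insert_le [Finite ι] (hs : 0 ≤ s) (hs1 : s ≤ 1) {i : ι} (hi : i ∉ I)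
    (x : ι → Bool) :
    maxAgreement s P (insert i I) x ≤ (1 - s) * maxAgreement s P I x +
      2 * s * maxAgreement s {v ∈ P | v i = some (x i)} I x := by
  have h₀ (Q : Set (ι → Option Bool)) := maxAgreement_nonneg (P := Q) (I := I) hs hs1 x
  have hs' := sub_nonneg.2 hs1
  refine Real.iSup_le (fun v ↦ ?_) (by
    have := h₀ P
    have := h₀ {v ∈ P | v i = some (x i)}
    positivity)
  rw [prod_insert hi]
  have hP := prod_le_maxAgreement (s := s) (I := I) v.2 x
  split_ifs with hv
  · have hQ := prod_le_maxAgreement (s := s) (I := I) (P := {v ∈ P | v i = some (x i)})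
      ⟨v.2, hv⟩ x
    have := mul_le_mul_of_nonneg_left hP hs'
    have := mul_le_mul_of_nonneg_left hQ hs
    linarith
  · have := mul_le_mul_of_nonneg_left hP hs'
    have := mul_nonneg hs (h₀ {v ∈ P | v i = some (x i)})
    linarith

lemma expect_maxAgreement_le_shatterSum [Fintype ι] (hs : 0 ≤ s) (hs1 : s ≤ 1)
    (P : Set (ι → Option Bool)) (I : Finset ι) :
    𝔼 x, maxAgreement s P I x ≤ shatterSum s P I := by
  induction I using Finset.induction_on generalizing P with
  | empty =>
    obtain rfl | ⟨v, hv⟩ := P.eq_empty_or_nonempty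
    · simp [maxAgreement, shatterSum, IsShattered]
    · have : Nonempty P := ⟨⟨v, hv⟩⟩
      have : IsShattered P ∅ := fun _ ↦ ⟨v, hv, by simp⟩
      simp [maxAgreement, shatterSum, this]
  | insert i I hi ih =>
    calc 𝔼 x, maxAgreement s P (insert i I) x
        ≤ 𝔼 x : ι → Bool, ((1 - s) * maxAgreement s P I x +
            2 * s * maxAgreement s {v ∈ P | v i = some (x i)} I x) :=
          expect_le_expect fun x _ ↦ maxAgreement_insert_le hs hs1 hi x
      _ = (1 - s) * 𝔼 x, maxAgreement s P I x +
            s * ∑ b, 𝔼 x, maxAgreement s {v ∈ P | v i = some b} I x := by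
          rw [expect_add_distrib, ← mul_expect, ← mul_expect,
            ← expect_update i fun x ↦ maxAgreement s {v ∈ P | v i = some (x i)} I x]
          simp only [update_self, maxAgreement_update hi,
            Fintype.expect_eq_sum_div_card (ι := Bool), Fintype.card_bool]
          rw [← expect_sum_comm, ← expect_div]
          push_cast
          ring
      _ ≤ (1 - s) * shatterSum s P I + s * ∑ b, shatterSum s {v ∈ P | v i = some b} I := by
          have := sub_nonneg.2 hs1
          gcongr <;> exact ih _
      _ ≤ shatterSum s P (insert i I) := shatterSum_add_le hs P hi

end MaxAgreement

lemma shatterSum_univ_le [Fintype ι] {s x : ℝ} (hs : 0 ≤ s) (hx : 0 < x) (hx1 : x ≤ 1)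
    {P : Set (ι → Option Bool)} {d : ℕ} (hd : ∀ J, IsShattered P J → #J ≤ d) :
    x ^ d * shatterSum s P univ ≤ (s * x + 1) ^ Fintype.card ι := by
  rw [← Fintype.sum_pow_mul_eq_add_pow, shatterSum, powerset_univ, mul_sum]
  refine sum_le_sum fun J _ ↦ ?_
  rw [one_pow, mul_one, mul_pow, mul_comm]
  split_ifs with hJ
  · exact mul_le_mul_of_nonneg_left (pow_le_pow_of_le_one hx.le hx1 (hd J hJ)) (by positivity)
  · rw [zero_mul]
    positivity

lemma exp_sub_sq_le_one_add {t : ℝ} (ht : -(1 / 2) ≤ t) : Real.exp (t - t ^ 2) ≤ 1 + t := by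
  obtain h | h := le_total 0 t
  · rw [← Real.le_log_iff_exp_le (by linarith)]
    refine le_trans ?_ (Real.one_sub_inv_le_log_of_pos (by linarith))
    rw [← one_div, one_sub_div (by linarith), le_div_iff₀ (by linarith)]
    nlinarith [pow_nonneg h 3]
  · have hexp := Real.quadratic_le_exp_of_nonneg (x := t ^ 2 - t) (by nlinarith)
    rw [← neg_sub, Real.exp_neg]
    refine inv_le_of_inv_le₀ (by linarith) (le_trans ?_ hexp)
    rw [inv_le_iff_one_le_mul₀ (by linarith)]
    nlinarith [mul_nonneg (sq_nonneg t) (neg_nonneg.2 h), mul_nonneg (sq_nonneg t) (sq_nonneg t),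
      mul_nonneg (mul_nonneg (sq_nonneg t) (neg_nonneg.2 h)) (sq_nonneg t)]

lemma exp_expect_le_expect_exp {X : Type*} [Fintype X] [Nonempty X] (f : X → ℝ) :
    Real.exp (𝔼 x, f x) ≤ 𝔼 x, Real.exp (f x) := by
  have h := convexOn_exp.map_sum_le (t := univ) (w := fun _ ↦ (Fintype.card X : ℝ)⁻¹) (p := f)
    (fun _ _ ↦ by positivity) (by simp) fun _ _ ↦ Set.mem_univ _
  simpa only [smul_eq_mul, ← mul_sum, Fintype.expect_eq_sum_div_card, div_eq_inv_mul] using h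

section Agreement

variable [Fintype ι] {η : ℝ}

lemma exp_agreement_le_prod (hη : 0 ≤ η) (hη' : η ≤ 1 / 2) (v : ι → Option Bool) (x : ι → Bool) :
    Real.exp (Fintype.card ι * (2 * η * (𝔼 i, if v i = some (x i) then 1 else 0) - η - η ^ 2)) ≤
      ∏ i, if v i = some (x i) then 1 + η else 1 - η := by
  calc _ = ∏ i, Real.exp (if v i = some (x i) then η - η ^ 2 else -η - (-η) ^ 2) := by
        rw [← Real.exp_sum]
        congr 1
        rw [mul_sub, mul_sub, mul_left_comm, Fintype.card_mul_expect, ← nsmul_eq_mul,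
          ← nsmul_eq_mul, ← card_univ, ← sum_const, ← sum_const, mul_sum, ← sum_sub_distrib,
          ← sum_sub_distrib]
        exact sum_congr rfl fun i _ ↦ by split_ifs <;> ring
    _ ≤ _ := prod_le_prod (fun _ _ ↦ (Real.exp_pos _).le) fun i _ ↦ by
        split_ifs
        · exact exp_sub_sq_le_one_add (by linarith)
        · exact exp_sub_sq_le_one_add (by linarith)

variable [DecidableEq ι]

lemma exp_le_shatterSum (hη : 0 ≤ η) (hη' : η ≤ 1 / 2) (V : (ι → Bool) → ι → Option Bool)
    (hV : 1 / 2 + η ≤ 𝔼 x, 𝔼 i, if V x i = some (x i) then 1 else 0) :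
    Real.exp (η ^ 2 * Fintype.card ι) ≤ shatterSum η (Set.range V) univ := by
  refine le_trans ?_ (expect_maxAgreement_le_shatterSum hη (by linarith) _ _)
  calc Real.exp (η ^ 2 * Fintype.card ι)
      ≤ Real.exp (𝔼 x, Fintype.card ι *
          (2 * η * (𝔼 i, if V x i = some (x i) then 1 else 0) - η - η ^ 2)) := by
        rw [← mul_expect, expect_sub_distrib, expect_sub_distrib, ← mul_expect,
          Fintype.expect_const, Fintype.expect_const, mul_comm]
        gcongr
        nlinarith
    _ ≤ _ := exp_expect_le_expect_exp _
    _ ≤ 𝔼 x, maxAgreement η (Set.range V) univ x := expect_le_expect fun x _ ↦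
        (exp_agreement_le_prod hη hη' (V x) x).trans
          (prod_le_maxAgreement (Set.mem_range_self x) x)

lemma exists_isShattered_of_le_expect_agreement (hη : 0 < η) (hη' : η ≤ 1 / 2)
    (V : (ι → Bool) → ι → Option Bool)
    (hV : 1 / 2 + η ≤ 𝔼 x, 𝔼 i, if V x i = some (x i) then 1 else 0) :
    ∃ J, IsShattered (Set.range V) J ∧
      η ^ 2 * Fintype.card ι / (2 * Real.log (2 / η)) ≤ #J := by
  classical
  have hempty : IsShattered (Set.range V) ∅ := fun f ↦ ⟨V f, ⟨f, rfl⟩, by simp⟩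
  obtain ⟨J, hJ, hmax⟩ := exists_max_image ({J | IsShattered (Set.range V) J} : Finset (Finset ι))
    card ⟨∅, by simpa using hempty⟩
  simp only [mem_filter, mem_univ, true_and] at hJ hmax
  refine ⟨J, hJ, ?_⟩
  have hlog : 0 < Real.log (2 / η) := Real.log_pos (by rw [lt_div_iff₀ hη]; linarith)
  have hexp : (η / 2) ^ #J * Real.exp (η ^ 2 * Fintype.card ι) ≤
      Real.exp (η ^ 2 / 2 * Fintype.card ι) :=
    calc _ ≤ (η / 2) ^ #J * shatterSum η (Set.range V) univ := by
          gcongr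
          exact exp_le_shatterSum hη.le hη' V hV
      _ ≤ (η * (η / 2) + 1) ^ Fintype.card ι :=
          shatterSum_univ_le hη.le (by linarith) (by linarith) hmax
      _ ≤ Real.exp (η * (η / 2)) ^ Fintype.card ι := by
          gcongr
          exact Real.add_one_le_exp _
      _ = Real.exp (η ^ 2 / 2 * Fintype.card ι) := by
          rw [← Real.exp_nat_mul]
          ring_nf
  have h := Real.log_le_log (by positivity) hexp
  rw [Real.log_mul (by positivity) (Real.exp_ne_zero _), Real.log_exp, Real.log_exp, Real.log_pow,
    ← inv_div, Real.log_inv] at h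
  rw [div_le_iff₀ (by positivity)]
  linarith

end Agreement

end Shattering

namespace Decoder

variable {n q : ℕ}

open scoped Classical in
/-- The decoder that always queries `S` and outputs `g`. -/
noncomputable def deterministic (S : Finset (Fin n)) (g : (Fin n → Bool) → Bool) (hS : #S ≤ q)
    (hg : ∀ y y' : Fin n → Bool, (∀ j ∈ S, y j = y' j) → g y = g y') : Decoder n q where
  p a := if a = (S, g) then 1 else 0
  nonneg a := by split_ifs <;> norm_num
  sum_one := by simp
  query_bound a ha := by
    obtain rfl : a = (S, g) := of_not_not fun h ↦ ha (if_neg h)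
    exact hS
  local_dep a ha := by
    obtain rfl : a = (S, g) := of_not_not fun h ↦ ha (if_neg h)
    exact hg

section Deterministic

variable {S : Finset (Fin n)} {g : (Fin n → Bool) → Bool} (hS : #S ≤ q)
  (hg : ∀ y y' : Fin n → Bool, (∀ j ∈ S, y j = y' j) → g y = g y')

lemma correctProb_deterministic (y : Fin n → Bool) (b : Bool) :
    (deterministic S g hS hg).correctProb y b = if g y = b then 1 else 0 := by
  rw [correctProb, sum_eq_single (S, g)]
  · simp [deterministic]
  · intro a _ ha
    simp [deterministic, ha]
  · simp

lemma queryProb_deterministic (j : Fin n) :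
    (deterministic S g hS hg).queryProb j = if j ∈ S then 1 else 0 := by
  rw [queryProb, sum_eq_single (S, g)]
  · simp [deterministic]
  · intro a _ ha
    simp [deterministic, ha]
  · simp

end Deterministic

/-- The decoder that outputs `b` without any query. -/
noncomputable def const (b : Bool) : Decoder n q :=
  deterministic ∅ (fun _ ↦ b) (Nat.zero_le _) fun _ _ _ ↦ rfl

lemma correctProb_const (b : Bool) (y : Fin n → Bool) (b' : Bool) :
    (const b : Decoder n q).correctProb y b' = if b = b' then 1 else 0 :=
  correctProb_deterministic _ _ _ _

lemma queryProb_const (b : Bool) (j : Fin n) : (const b : Decoder n q).queryProb j = 0 :=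
  (queryProb_deterministic _ _ _).trans (if_neg (notMem_empty j))

section Mixture

variable {Ω : Type*} [Fintype Ω] {w : Ω → ℝ} (hw : ∀ ω, 0 ≤ w ω) (hsum : ∑ ω, w ω = 1)
  (D : Ω → Decoder n q)

/-- The decoder that runs `D ω` with probability `w ω`. -/
noncomputable def mixture : Decoder n q where
  p a := ∑ ω, w ω * (D ω).p a
  nonneg a := sum_nonneg fun ω _ ↦ mul_nonneg (hw ω) ((D ω).nonneg a)
  sum_one := by
    rw [sum_comm]
    simp only [← mul_sum, (D _).sum_one, mul_one, hsum]
  query_bound a ha := by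
    obtain ⟨ω, _, hω⟩ := exists_ne_zero_of_sum_ne_zero ha
    exact (D ω).query_bound a (right_ne_zero_of_mul hω)
  local_dep a ha := by
    obtain ⟨ω, _, hω⟩ := exists_ne_zero_of_sum_ne_zero ha
    exact (D ω).local_dep a (right_ne_zero_of_mul hω)

lemma correctProb_mixture (y : Fin n → Bool) (b : Bool) :
    (mixture hw hsum D).correctProb y b = ∑ ω, w ω * (D ω).correctProb y b := by
  simp only [correctProb, mixture, mul_sum, mul_ite, mul_zero]
  rw [sum_comm]
  refine sum_congr rfl fun a _ ↦ ?_
  split_ifs <;> simp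

lemma queryProb_mixture (j : Fin n) :
    (mixture hw hsum D).queryProb j = ∑ ω, w ω * (D ω).queryProb j := by
  simp only [queryProb, mixture, mul_sum, mul_ite, mul_zero]
  rw [sum_comm]
  refine sum_congr rfl fun a _ ↦ ?_
  split_ifs <;> simp

end Mixture

variable (D : Decoder n q)

lemma correctProb_nonneg (y : Fin n → Bool) (b : Bool) : 0 ≤ D.correctProb y b :=
  sum_nonneg fun a _ ↦ by split_ifs <;> simp [D.nonneg a]

lemma queryProb_nonneg (j : Fin n) : 0 ≤ D.queryProb j :=
  sum_nonneg fun a _ ↦ by split_ifs <;> simp [D.nonneg a]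

lemma correctProb_false (y : Fin n → Bool) :
    D.correctProb y false = 1 - D.correctProb y true := by
  rw [eq_sub_iff_add_eq, ← D.sum_one, correctProb, correctProb, ← sum_add_distrib]
  exact sum_congr rfl fun a _ ↦ by cases a.2 y <;> simp

lemma correctProb_le_add_sum_queryProb (y y' : Fin n → Bool) (b : Bool) :
    D.correctProb y b ≤ D.correctProb y' b + ∑ j with y' j ≠ y j, D.queryProb j := by
  simp only [correctProb, queryProb]
  rw [sum_comm, ← sum_add_distrib]
  refine sum_le_sum fun a _ ↦ ?_
  have hnonneg (P : Prop) [Decidable P] : 0 ≤ if P then D.p a else 0 := by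
    split_ifs <;> simp [D.nonneg a]
  by_cases hlocal : a.2 y = a.2 y'
  · rw [hlocal]
    exact le_add_of_nonneg_right (sum_nonneg fun _ _ ↦ hnonneg _)
  · by_cases hp : D.p a = 0
    · simp [hp]
    have ⟨j, hj, hyj⟩ : ∃ j ∈ a.1, y j ≠ y' j := by
      by_contra! h
      exact hlocal (D.local_dep a hp y y' h)
    calc (if a.2 y = b then D.p a else 0) ≤ D.p a := by split_ifs <;> simp [D.nonneg a]
      _ = if j ∈ a.1 then D.p a else 0 := (if_pos hj).symm
      _ ≤ ∑ j with y' j ≠ y j, if j ∈ a.1 then D.p a else 0 :=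
        single_le_sum (f := fun j ↦ if j ∈ a.1 then D.p a else 0) (fun _ _ ↦ hnonneg _)
          (by simpa using hyj.symm)
      _ ≤ _ := le_add_of_nonneg_left (hnonneg _)

/-- The decoder `D` biased so that its probability of outputting `true` is compared with `τ` instead
of `1/2`: with probability `1/2` it runs `D`, otherwise it outputs `true` with probability
`1 - τ` without any query. -/
noncomputable def biased {τ : ℝ} (hτ : τ ∈ Set.Icc 0 1) : Decoder n q :=
  mixture (w := ![1 / 2, (1 - τ) / 2, τ / 2])
    (by simp [Fin.forall_fin_succ, hτ.1, hτ.2, div_nonneg]) (by simp [Fin.sum_univ_three]; ring)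
    ![D, const true, const false]

variable {τ : ℝ} (hτ : τ ∈ Set.Icc 0 1)

lemma correctProb_biased_true (y : Fin n → Bool) :
    (D.biased hτ).correctProb y true = 1 / 2 + (D.correctProb y true - τ) / 2 := by
  simp [biased, correctProb_mixture, correctProb_const, Fin.sum_univ_three]
  ring

lemma queryProb_biased (j : Fin n) : (D.biased hτ).queryProb j = D.queryProb j / 2 := by
  simp [biased, queryProb_mixture, queryProb_const, Fin.sum_univ_three]
  ring

end Decoder

section SmoothCodes

lemma IsLDC.mono {k n q : ℕ} {δ δ' η η' : ℝ} {C : (Fin k → Bool) → Fin n → Bool}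
    (h : IsLDC k n q δ η C) (hδ : δ' ≤ δ) (hη : η' ≤ η) : IsLDC k n q δ' η' C := fun i ↦ by
  obtain ⟨D, hD⟩ := h i
  refine ⟨D, fun x y hy ↦ ?_⟩
  have := hD x y (hy.trans (by gcongr))
  linarith

lemma IsSmoothCode.mono {k n q : ℕ} {c η η' : ℝ} {C : (Fin k → Bool) → Fin n → Bool}
    (h : IsSmoothCode k n q c η C) (hη : η' ≤ η) : IsSmoothCode k n q c η' C := fun i ↦ by
  obtain ⟨D, hsucc, hsmooth⟩ := h i
  exact ⟨D, fun x ↦ by linarith [hsucc x], hsmooth⟩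

lemma IsSmoothCode.isLDC {k n q : ℕ} {c δ η : ℝ} {C : (Fin k → Bool) → Fin n → Bool}
    (hc : 0 ≤ c) (hδ : 0 ≤ δ) (h : IsSmoothCode k n q c η C) :
    IsLDC k n q δ (η - c * δ) C := fun i ↦ by
  obtain ⟨D, hsucc, hsmooth⟩ := h i
  refine ⟨D, fun x y hy ↦ ?_⟩
  have hquery : ∑ j with y j ≠ C x j, D.queryProb j ≤ c * δ :=
    calc _ ≤ #{j | y j ≠ C x j} * (c / n) := by
          rw [← nsmul_eq_mul]
          exact sum_le_card_nsmul _ _ _ fun j _ ↦ hsmooth j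
      _ ≤ δ * n * (c / n) := by gcongr
      _ = c * δ * (n / n) := by ring
      _ ≤ c * δ := mul_le_of_le_one_right (by positivity) (div_self_le_one _)
  linarith [hsucc x, D.correctProb_le_add_sum_queryProb (C x) y (x i)]

/-- The bit read off from `φ` by comparison with the threshold `τ`, if `φ` clears it by a margin
of `m`. -/
noncomputable def thresholdBit (m τ φ : ℝ) : Option Bool :=
  if τ + m ≤ φ then some true else if φ ≤ τ - m then some false else none

lemma thresholdBit_eq_true {m τ φ : ℝ} : thresholdBit m τ φ = some true ↔ τ + m ≤ φ := by
  rw [thresholdBit]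
  split_ifs <;> simp [*]

lemma thresholdBit_eq_false {m τ φ : ℝ} (hm : 0 < m) :
    thresholdBit m τ φ = some false ↔ φ ≤ τ - m := by
  rw [thresholdBit]
  split_ifs with h₁ h₂
  · simpa using h₁.trans_lt' (by linarith)
  all_goals simp [*]

/-- The midpoint of the `j`-th of `M` equal subintervals of `[0, 1]`. -/
noncomputable def gridMidpoint (M : ℕ) (j : Fin M) : ℝ :=
  (j + 1 / 2) / M

lemma gridMidpoint_mem_Icc {M : ℕ} (j : Fin M) : gridMidpoint M j ∈ Set.Icc 0 1 := by
  have : (j + 1 : ℝ) ≤ M := by exact_mod_cast j.2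
  refine ⟨by unfold gridMidpoint; positivity, div_le_one_of_le₀ ?_ (Nat.cast_nonneg _)⟩
  linarith

lemma sub_le_expect_add_one_div_le {M : ℕ} [NeZero M] {φ : ℝ} (hφ : φ ≤ 1) :
    φ - 1 / M ≤ 𝔼 j : Fin M, if (j + 1 : ℝ) / M ≤ φ then 1 else 0 := by
  have hM : (0 : ℝ) < M := by exact_mod_cast NeZero.pos M
  have hfloor : ⌊M * φ⌋₊ ≤ M := by
    simpa using Nat.floor_le_floor (mul_le_of_le_one_right hM.le hφ)
  have hcount : #{j : Fin M | (j + 1 : ℝ) / M ≤ φ} = ⌊M * φ⌋₊ := by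
    rw [← min_eq_right hfloor, ← Fin.card_filter_val_lt]
    congr! 2 with j
    rw [div_le_iff₀' hM, ← Nat.succ_le_iff, Nat.le_floor_iff' (Nat.succ_ne_zero _), Nat.cast_succ]
  rw [Fintype.expect_eq_sum_div_card, sum_boole, hcount, Fintype.card_fin, le_div_iff₀ hM, sub_mul,
    div_mul_cancel₀ _ hM.ne', mul_comm]
  exact (Nat.sub_one_lt_floor _).le

lemma thresholdBit_gridMidpoint_eq_true {M : ℕ} (j : Fin M) (φ : ℝ) :
    thresholdBit (1 / (2 * M)) (gridMidpoint M j) φ = some true ↔ (j + 1 : ℝ) / M ≤ φ := by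
  rw [thresholdBit_eq_true, gridMidpoint]
  congr! 1
  ring

lemma thresholdBit_gridMidpoint_eq_false {M : ℕ} (j : Fin M) (φ : ℝ) :
    thresholdBit (1 / (2 * M)) (gridMidpoint M j) φ = some false ↔
      (j.rev + 1 : ℝ) / M ≤ 1 - φ := by
  have hM : (0 : ℝ) < M := by exact_mod_cast j.pos
  have hmid : gridMidpoint M j - 1 / (2 * M) = 1 - (M - (j + 1) + 1) / M := by
    rw [gridMidpoint]
    field_simp
    ring
  rw [thresholdBit_eq_false (by positivity), hmid, Fin.val_rev,
    Nat.cast_sub (Nat.succ_le_of_lt j.2), le_sub_comm, Nat.cast_succ]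

lemma Decoder.correctProb_le_expect_thresholdBit {n q M : ℕ} [NeZero M] (D : Decoder n q)
    (y : Fin n → Bool) (b : Bool) :
    D.correctProb y b - 1 / M ≤ 𝔼 j,
      if thresholdBit (1 / (2 * M)) (gridMidpoint M j) (D.correctProb y true) = some b
      then 1 else 0 := by
  have htrue := D.correctProb_nonneg y true
  have hfalse := D.correctProb_nonneg y false
  rw [D.correctProb_false] at hfalse
  cases b with
  | true =>
    simpa only [thresholdBit_gridMidpoint_eq_true] using
      sub_le_expect_add_one_div_le (by linarith)
  | false =>
    rw [D.correctProb_false]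
    simp only [thresholdBit_gridMidpoint_eq_false]
    exact (sub_le_expect_add_one_div_le (by linarith)).trans_eq
      (Fintype.expect_equiv Fin.revPerm _ _ fun j ↦ by simp)

lemma Decoder.le_correctProb_biased {n q : ℕ} (D : Decoder n q) {m τ : ℝ} (hm : 0 < m)
    (hτ : τ ∈ Set.Icc 0 1) {y : Fin n → Bool} {b : Bool}
    (h : thresholdBit m τ (D.correctProb y true) = some b) :
    1 / 2 + m / 2 ≤ (D.biased hτ).correctProb y b := by
  cases b with
  | true =>
    rw [correctProb_biased_true]
    linarith [thresholdBit_eq_true.1 h]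
  | false =>
    rw [correctProb_false, correctProb_biased_true]
    linarith [(thresholdBit_eq_false hm).1 h]

lemma exists_isSmoothCode_of_isShattered {k N q : ℕ} {c m : ℝ} (hm : 0 < m)
    {C : (Fin k → Bool) → Fin N → Bool} {D : Fin k → Decoder N q}
    (hD : ∀ i j, (D i).queryProb j ≤ c / N) {τ : Fin k → ℝ} (hτ : ∀ i, τ i ∈ Set.Icc 0 1)
    {J : Finset (Fin k)}
    (hJ : IsShattered
      (Set.range fun x i ↦ thresholdBit m (τ i) ((D i).correctProb (C x) true)) J) :
    ∃ C' : (Fin #J → Bool) → Fin N → Bool, IsSmoothCode #J N q c (m / 2) C' := by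
  have hinj : Injective fun i ↦ (J.equivFin.symm i : Fin k) :=
    Subtype.val_injective.comp J.equivFin.symm.injective
  have hrealize (x : Fin #J → Bool) : ∃ x' : Fin k → Bool, ∀ i,
      thresholdBit m (τ (J.equivFin.symm i)) ((D (J.equivFin.symm i)).correctProb (C x') true) =
        some (x i) := by
    obtain ⟨_, ⟨x', rfl⟩, hx'⟩ := hJ (extend (fun i ↦ (J.equivFin.symm i : Fin k)) x fun _ ↦ false)
    refine ⟨x', fun i ↦ (hx' _ (J.equivFin.symm i).2).trans ?_⟩
    rw [hinj.extend_apply]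
  choose message hmessage using hrealize
  refine ⟨fun x ↦ C (message x), fun i ↦ ⟨(D (J.equivFin.symm i)).biased (hτ _),
    fun x ↦ Decoder.le_correctProb_biased _ hm _ (hmessage x i), fun j ↦ ?_⟩⟩
  rw [Decoder.queryProb_biased]
  have := Decoder.queryProb_nonneg (D (J.equivFin.symm i)) j
  linarith [hD (J.equivFin.symm i) j]

lemma isAvgSmoothCode_iff_expect {k N q : ℕ} {c η : ℝ}
    {C : (Fin k → Bool) → Fin N → Bool} :
    IsAvgSmoothCode k N q c η C ↔ ∃ D : Fin k → Decoder N q,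
      (∀ i j, (D i).queryProb j ≤ c / N) ∧
        1 / 2 + η ≤ 𝔼 x, 𝔼 i, (D i).correctProb (C x) (x i) := by
  simp only [IsAvgSmoothCode, Fintype.expect_eq_sum_div_card, ← sum_div, div_div,
    Fintype.card_pi, Fintype.card_bool, Fintype.card_fin, prod_const, card_univ]
  push_cast
  simp only [mul_comm]

lemma exists_le_expect_comp {X Y : Type*} [Fintype X] [Fintype Y] [Nonempty Y] (f : X → Y → ℝ) :
    ∃ g : X → Y, 𝔼 x, 𝔼 y, f x y ≤ 𝔼 x, f x (g x) := by
  have hpoint (x : X) : ∃ y, 𝔼 y, f x y ≤ f x y := by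
    simpa using exists_le_of_le_expect univ_nonempty (le_refl (𝔼 y, f x y))
  choose g hg using hpoint
  exact ⟨g, expect_le_expect fun x _ ↦ hg x⟩

lemma exists_gridMidpoint_thresholds {k N q M : ℕ} [NeZero k] [NeZero M] (D : Fin k → Decoder N q)
    (C : (Fin k → Bool) → Fin N → Bool) :
    ∃ j : Fin k → Fin M, (𝔼 x, 𝔼 i, (D i).correctProb (C x) (x i)) - 1 / M ≤
      𝔼 x, 𝔼 i, if thresholdBit (1 / (2 * M)) (gridMidpoint M (j i))
        ((D i).correctProb (C x) true) = some (x i) then 1 else 0 := by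
  obtain ⟨j, hj⟩ := exists_le_expect_comp fun (i : Fin k) (j : Fin M) ↦
    𝔼 x : Fin k → Bool, if thresholdBit (1 / (2 * M)) (gridMidpoint M j)
      ((D i).correctProb (C x) true) = some (x i) then (1 : ℝ) else 0
  refine ⟨j, ?_⟩
  calc (𝔼 x, 𝔼 i, (D i).correctProb (C x) (x i)) - 1 / M
      = 𝔼 i, 𝔼 x : Fin k → Bool, ((D i).correctProb (C x) (x i) - 1 / M) := by
        rw [expect_comm]
        simp only [expect_sub_distrib, Fintype.expect_const]
    _ ≤ 𝔼 i, 𝔼 x : Fin k → Bool, 𝔼 j, if thresholdBit (1 / (2 * M)) (gridMidpoint M j)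
          ((D i).correctProb (C x) true) = some (x i) then 1 else 0 :=
        expect_le_expect fun i _ ↦ expect_le_expect fun x _ ↦
          (D i).correctProb_le_expect_thresholdBit _ _
    _ = 𝔼 i, 𝔼 j, 𝔼 x : Fin k → Bool, if thresholdBit (1 / (2 * M)) (gridMidpoint M j)
          ((D i).correctProb (C x) true) = some (x i) then 1 else 0 :=
        expect_congr rfl fun i _ ↦ expect_comm _ _ _
    _ ≤ _ := hj
    _ = _ := expect_comm _ _ _

lemma exists_thresholds {k N q : ℕ} [NeZero k] {η : ℝ} (hη : 0 < η) (hη' : η ≤ 1 / 2)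
    (D : Fin k → Decoder N q) (C : (Fin k → Bool) → Fin N → Bool) :
    ∃ (m : ℝ) (τ : Fin k → ℝ), η / 5 ≤ m ∧ (∀ i, τ i ∈ Set.Icc 0 1) ∧
      (𝔼 x, 𝔼 i, (D i).correctProb (C x) (x i)) - η / 2 ≤
        𝔼 x, 𝔼 i, if thresholdBit m (τ i) ((D i).correctProb (C x) true) = some (x i)
          then 1 else 0 := by
  set M := ⌈2 / η⌉₊
  have hM : 2 / η ≤ M := Nat.le_ceil _
  have hM' : (M : ℝ) ≤ 5 / (2 * η) := by
    refine (Nat.ceil_lt_add_one (by positivity)).le.trans ?_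
    rw [div_add_one hη.ne', div_le_div_iff₀ hη (by positivity)]
    nlinarith
  have hMpos : 0 < (M : ℝ) := hM.trans_lt' (by positivity)
  have : NeZero M := ⟨by exact_mod_cast hMpos.ne'⟩
  obtain ⟨j, hj⟩ := exists_gridMidpoint_thresholds (M := M) D C
  refine ⟨1 / (2 * M), fun i ↦ gridMidpoint M (j i), ?_, fun i ↦ gridMidpoint_mem_Icc (j i),
    hj.trans' (sub_le_sub_left ?_ _)⟩
  · rw [le_div_iff₀ (by positivity)]
    rw [le_div_iff₀ (by positivity)] at hM'
    linarith
  · rw [div_le_iff₀ hMpos]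
    rw [div_le_iff₀ hη] at hM
    linarith

-- Thresholding the decoders makes them deterministic, and restricting to a shattered set of message
-- bits makes them correct for every message.
theorem IsAvgSmoothCode.exists_isSmoothCode {k N q : ℕ} {c η : ℝ} (hη : 0 < η)
    (hη' : η ≤ 1 / 2) {C : (Fin k → Bool) → Fin N → Bool} (h : IsAvgSmoothCode k N q c η C) :
    ∃ (l : ℕ) (C' : (Fin l → Bool) → Fin N → Bool), IsSmoothCode l N q c (η / 10) C' ∧
      η ^ 2 * k / (8 * Real.log (4 / η)) ≤ l := by
  obtain ⟨D, hD, havg⟩ := isAvgSmoothCode_iff_expect.1 h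
  have : NeZero k := ⟨by
    rintro rfl
    simp only [univ_eq_empty, expect_empty, expect_const_zero] at havg
    linarith⟩
  obtain ⟨m, τ, hm, hτ, hagree⟩ := exists_thresholds hη hη' D C
  obtain ⟨J, hJ, hcard⟩ := exists_isShattered_of_le_expect_agreement (half_pos hη) (by linarith)
    (fun x i ↦ thresholdBit m (τ i) ((D i).correctProb (C x) true)) (by linarith)
  obtain ⟨C', hC'⟩ := exists_isSmoothCode_of_isShattered (by linarith) hD hτ hJ
  refine ⟨#J, C', hC'.mono (by linarith), hcard.trans_eq' ?_⟩
  rw [Fintype.card_fin, div_div_eq_mul_div]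
  ring_nf

end SmoothCodes

section LineCode

variable (F : Type*) {V : Type*} [Field F] [AddCommGroup V] [Module F V]

/-- The directions of the nontrivial lines through `w` that lie in `B` except possibly at `w`. -/
def puncturedLineDirections (B : Set V) (w : V) : Set V :=
  {y | y ≠ 0 ∧ ∀ a : F, a ≠ 0 → w + a • y ∈ B}

lemma puncturedLineDirections_empty (w : V) : puncturedLineDirections F (∅ : Set V) w = ∅ :=
  Set.eq_empty_of_forall_notMem fun _ hy ↦ hy.2 1 one_ne_zero

lemma mem_puncturedLineDirections_congr {A B : Set V} {w y : V}
    (h : ∀ a : F, a ≠ 0 → (w + a • y ∈ A ↔ w + a • y ∈ B)) :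
    y ∈ puncturedLineDirections F A w ↔ y ∈ puncturedLineDirections F B w :=
  and_congr_right fun _ ↦ forall₂_congr h

lemma exists_le_expect_density_puncturedLineDirections [Finite F] {ε : ℝ} (hε : 0 < ε) :
    ∃ γ > 0, ∃ n₁ : ℕ, ∀ {V : Type*} [AddCommGroup V] [Module F V] [Fintype V] (B : Set V),
      n₁ ≤ Fintype.card V → ε ≤ density B →
        γ ≤ 𝔼 w, density (puncturedLineDirections F B w) := by
  obtain ⟨γ, hγ, h⟩ := exists_le_expect_density_line_subset F hε
  refine ⟨γ / 2, by positivity, ⌈2 / γ⌉₊, fun {V} _ _ _ B hcard hB ↦ ?_⟩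
  have hcard' : 2 / γ ≤ Fintype.card V := Nat.ceil_le.1 hcard
  have hzero : density {(0 : V)} ≤ γ / 2 := by
    rw [density_eq_ncard_div, Set.ncard_singleton, Nat.cast_one,
      one_div_le (hcard'.trans_lt' (by positivity)) (by positivity), one_div_div]
    exact hcard'
  have hpoint (w : V) : density {y | ∀ a : F, w + a • y ∈ B} ≤
      density (puncturedLineDirections F B w) + density {(0 : V)} :=
    (density_mono fun _ hy ↦ (em _).symm.imp_left fun hne ↦ ⟨hne, fun a _ ↦ hy a⟩).trans
      (density_union_le _ _)
  have := (h B hB).trans (expect_le_expect fun w _ ↦ hpoint w)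
  rw [expect_add_distrib, Fintype.expect_const] at this
  linarith

variable [Fintype F]

lemma puncturedLineDirections_eq_empty [DecidableEq V] {B : Finset V} {w : V}
    (h : ∀ y ≠ 0, #{a : F | w + a • y ∈ B} ≤ Fintype.card F - 2) :
    puncturedLineDirections F (B : Set V) w = ∅ := by
  classical
  refine Set.eq_empty_of_forall_notMem fun y ⟨hy, hline⟩ ↦ ?_
  have hsub : ({0}ᶜ : Finset F) ⊆ ({a : F | w + a • y ∈ B} : Finset F) := fun a ha ↦ by
    simpa using hline a (by simpa using ha)
  have hcard := (card_le_card hsub).trans (h y hy)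
  rw [card_compl, card_singleton] at hcard
  have := Fintype.one_lt_card (α := F)
  omega

variable {F} [Fintype V] {N : ℕ}

open scoped Classical in
/-- The codeword of `B`: its indicator function, with coordinates indexed by the points of `V`
along `e`. -/
noncomputable def indicatorWord (e : V ≃ Fin N) (B : Set V) (j : Fin N) : Bool :=
  decide (e.symm j ∈ B)

variable (F)

open scoped Classical in
/-- The decoder that picks a random bit `b` and a random direction `y`, queries the line through
`w b` in direction `y` outside `w b`, and outputs `b` if `y ≠ 0` and all answers are `true`,
and `!b` otherwise. -/
noncomputable def lineDecoder (e : V ≃ Fin N) (w : Bool → V) :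
    Decoder N (Fintype.card F - 1) :=
  .mixture (w := fun _ : Bool × V ↦ (Fintype.card (Bool × V) : ℝ)⁻¹)
    (fun _ ↦ by positivity)
    (by rw [sum_const, card_univ, nsmul_eq_mul, mul_inv_cancel₀ (by simp)]) fun ω ↦
      .deterministic (image (fun a : F ↦ e (w ω.1 + a • ω.2)) {0}ᶜ)
        (fun c ↦ if ω.2 ∈ puncturedLineDirections F {v | c (e v)} (w ω.1) then ω.1 else !ω.1)
        (card_image_le.trans_eq (by rw [card_compl, card_singleton]))
        fun _ _ hc ↦ if_congr (mem_puncturedLineDirections_congr F fun _ ha ↦ iff_of_eq <|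
          congrArg (· = true) (hc _ (mem_image_of_mem _ (by simpa using ha)))) rfl rfl

variable (e : V ≃ Fin N) (w : Bool → V)

lemma correctProb_lineDecoder (B : Set V) (b : Bool) :
    (lineDecoder F e w).correctProb (indicatorWord e B) b =
      1 / 2 + (density (puncturedLineDirections F B (w b)) -
        density (puncturedLineDirections F B (w !b))) / 2 := by
  classical
  have hB : {v | indicatorWord e B (e v)} = B := by
    ext v
    simp [indicatorWord]
  have hcorrect (A : Set V) (b' : Bool) :
      𝔼 y : V, (if (if y ∈ A then b' else !b') = b then (1 : ℝ) else 0) =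
        if b' = b then density A else 1 - density A := by
    split_ifs with h
    · exact expect_congr rfl fun y _ ↦ by by_cases hy : y ∈ A <;> simp [hy, h]
    · rw [density, ← Fintype.expect_const (ι := V) (1 : ℝ), ← expect_sub_distrib]
      exact expect_congr rfl fun y _ ↦ by by_cases hy : y ∈ A <;> simp [hy, h]
  simp only [lineDecoder, Decoder.correctProb_mixture, Decoder.correctProb_deterministic, hB]
  rw [← mul_sum, ← div_eq_inv_mul, ← Fintype.expect_eq_sum_div_card, expect_prod]
  simp only [hcorrect]
  rw [Fintype.expect_eq_sum_div_card, Fintype.sum_bool, Fintype.card_bool]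
  cases b <;> simp <;> ring

lemma queryProb_lineDecoder_le (j : Fin N) :
    (lineDecoder F e w).queryProb j ≤ ((Fintype.card F - 1 : ℕ) : ℝ) / N := by
  classical
  have hpoint (u : V) :
      𝔼 y : V, (if j ∈ image (fun a : F ↦ e (u + a • y)) {0}ᶜ then (1 : ℝ) else 0) ≤
        ((Fintype.card F - 1 : ℕ) : ℝ) / N := by
    have hsub : ({y : V | j ∈ image (fun a : F ↦ e (u + a • y)) {0}ᶜ} : Finset V) ⊆
        image (fun a : F ↦ a⁻¹ • (e.symm j - u)) {0}ᶜ := fun y hy ↦ by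
      simp only [mem_filter, mem_univ, true_and, mem_image, mem_compl, mem_singleton] at hy ⊢
      obtain ⟨a, ha, rfl⟩ := hy
      exact ⟨a, ha, by rw [e.symm_apply_apply, add_sub_cancel_left, inv_smul_smul₀ ha]⟩
    rw [Fintype.expect_eq_sum_div_card, sum_boole, Fintype.card_congr e, Fintype.card_fin]
    gcongr
    exact (card_le_card hsub).trans (card_image_le.trans_eq (by rw [card_compl, card_singleton]))
  simp only [lineDecoder, Decoder.queryProb_mixture, Decoder.queryProb_deterministic]
  rw [← mul_sum, ← div_eq_inv_mul, ← Fintype.expect_eq_sum_div_card, expect_prod]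
  exact expect_le univ_nonempty fun b _ ↦ hpoint (w b)

section Symmetrization

variable {ι Z : Type*}

/-- Splitting a family of pairs into the family of the entries at `!x i` and that of the entries
at `x i`. -/
def splitPairs (x : ι → Bool) : (ι → Bool → Z) ≃ (ι → Z) × (ι → Z) where
  toFun w := (fun i ↦ w i !x i, fun i ↦ w i (x i))
  invFun p i b := if b = x i then p.2 i else p.1 i
  left_inv w := by
    ext i b
    cases b <;> cases h : x i <;> simp [h]
  right_inv p := by ext i <;> simp

variable [Fintype ι] [DecidableEq ι] [Fintype Z]

lemma exists_le_expect_decoupled [Nonempty ι] [Nonempty Z] (f : (ι → Z) → Z → ℝ) :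
    ∃ w : ι → Bool → Z, 𝔼 z, 𝔼 u, f z u ≤
      𝔼 x : ι → Bool, 𝔼 i, f (fun j ↦ w j !x j) (w i (x i)) := by
  have hsplit (x : ι → Bool) (i : ι) :
      𝔼 w : ι → Bool → Z, f (fun j ↦ w j !x j) (w i (x i)) = 𝔼 z, 𝔼 u, f z u :=
    calc _ = 𝔼 p : (ι → Z) × (ι → Z), f p.1 (p.2 i) :=
          Fintype.expect_equiv (splitPairs x) _ _ fun _ ↦ rfl
      _ = 𝔼 z, 𝔼 u, f z u := by simp only [expect_prod, expect_eval]
  have havg : 𝔼 w : ι → Bool → Z, 𝔼 x : ι → Bool, 𝔼 i, f (fun j ↦ w j !x j) (w i (x i)) =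
      𝔼 z, 𝔼 u, f z u := by
    rw [expect_comm, ← Fintype.expect_const (ι := ι → Bool) (𝔼 z, 𝔼 u, f z u)]
    refine expect_congr rfl fun x _ ↦ ?_
    rw [expect_comm, ← Fintype.expect_const (ι := ι) (𝔼 z, 𝔼 u, f z u)]
    exact expect_congr rfl fun i _ ↦ hsplit x i
  simpa using exists_le_of_le_expect univ_nonempty havg.ge

end Symmetrization

theorem exists_isAvgSmoothCode {k : ℕ} [NeZero k] (e : V ≃ Fin N) {η : ℝ} (B : (Fin k → V) → Set V)
    (hB : ∀ z i, puncturedLineDirections F (B z) (z i) = ∅)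
    (hη : 2 * η ≤ 𝔼 z, 𝔼 u, density (puncturedLineDirections F (B z) u)) :
    ∃ C, IsAvgSmoothCode k N (Fintype.card F - 1) (Fintype.card F - 1 : ℕ) η C := by
  obtain ⟨w, hw⟩ := exists_le_expect_decoupled fun z u ↦
    density (puncturedLineDirections F (B z) u)
  refine ⟨fun x ↦ indicatorWord e (B fun i ↦ w i !x i), isAvgSmoothCode_iff_expect.2
    ⟨fun i ↦ lineDecoder F e (w i), fun i j ↦ queryProb_lineDecoder_le F e (w i) j, ?_⟩⟩
  simp only [correctProb_lineDecoder, hB _ _, density_empty, sub_zero, expect_add_distrib,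
    Fintype.expect_const, ← expect_div]
  linarith

lemma exists_isAvgSmoothCode_of_half_le_density {k : ℕ} [NeZero k] (e : V ≃ Fin N) {γ : ℝ}
    (hγ : 0 ≤ γ)
    (h : 1 / 2 ≤ density {z : Fin k → V | ∃ B : Set V,
      γ ≤ 𝔼 u, density (puncturedLineDirections F B u) ∧
        ∀ i, puncturedLineDirections F B (z i) = ∅}) :
    ∃ C, IsAvgSmoothCode k N (Fintype.card F - 1) (Fintype.card F - 1 : ℕ) (γ / 4) C := by
  set good := {z : Fin k → V | ∃ B : Set V, γ ≤ 𝔼 u, density (puncturedLineDirections F B u) ∧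
    ∀ i, puncturedLineDirections F B (z i) = ∅}
  have hB (z : Fin k → V) : ∃ B : Set V,
      γ * good.indicator 1 z ≤ 𝔼 u, density (puncturedLineDirections F B u) ∧
        ∀ i, puncturedLineDirections F B (z i) = ∅ := by
    by_cases hz : z ∈ good
    · rwa [Set.indicator_of_mem hz, Pi.one_apply, mul_one]
    · refine ⟨∅, ?_, fun i ↦ puncturedLineDirections_empty F (z i)⟩
      rw [Set.indicator_of_notMem hz, mul_zero]
      exact expect_nonneg fun u _ ↦ density_nonneg _
  choose B hγB hempty using hB
  refine exists_isAvgSmoothCode F e B hempty ?_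
  calc 2 * (γ / 4) = γ * (1 / 2) := by ring
    _ ≤ γ * density good := by gcongr
    _ = 𝔼 z, γ * good.indicator 1 z := by rw [density, mul_expect]
    _ ≤ _ := expect_le_expect fun z _ ↦ hγB z

lemma IsAvgSmoothCode.exists_isLDC {k N q : ℕ} {s η : ℝ} (hs : 1 ≤ s) (hη : 0 < η)
    (hη' : η ≤ 1 / 2) {C : (Fin k → Bool) → Fin N → Bool} (h : IsAvgSmoothCode k N q s η C) :
    ∃ (l : ℕ) (C' : (Fin l → Bool) → Fin N → Bool),
      IsLDC l N q (η / (20 * s)) (η / (20 * s)) C' ∧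
        (η / (20 * s)) ^ 2 * k / Real.log (1 / (η / (20 * s))) ≤ l := by
  obtain ⟨l, C', hC', hl⟩ := h.exists_isSmoothCode hη hη'
  have hs₀ : 0 < s := one_pos.trans_le hs
  have hle : η / (20 * s) ≤ η / 20 := by
    gcongr
    linarith
  have hadv : η / 10 - s * (η / (20 * s)) = η / 20 := by
    field_simp
    ring
  refine ⟨l, C', (hC'.isLDC hs₀.le (by positivity)).mono le_rfl (hle.trans_eq hadv.symm), ?_⟩
  rw [div_mul_eq_div_div] at hl
  refine hl.trans' ?_
  refine div_le_div₀ (by positivity) ?_ (Real.log_pos (by rw [lt_div_iff₀ hη]; linarith)) ?_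
  · calc (η / (20 * s)) ^ 2 * k ≤ (η / 20) ^ 2 * k := by gcongr
      _ ≤ η ^ 2 * k / 8 := by
        have : 0 ≤ η ^ 2 * k := by positivity
        linarith
  · rw [one_div_div]
    gcongr
    linarith

theorem lines_to_LDC_general {ε : ℝ} (hε : 0 < ε) :
    ∃ (n₁ : ℕ) (c : ℝ), 0 < n₁ ∧ c ∈ Set.Ioc 0 (1 / 2) ∧
      ∀ {V : Type*} [AddCommGroup V] [Module F V] [Fintype V] [DecidableEq V] {N : ℕ} (k : ℕ)
        [NeZero k], Fintype.card V = N → n₁ ≤ N →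
      Nat.card (Fin k → V) ≤ 2 * Set.ncard {z : Fin k → V | ∃ B : Finset V, ε * N ≤ #B ∧
        ∀ i, ∀ y ≠ 0, #{a : F | z i + a • y ∈ B} ≤ Fintype.card F - 2} →
      ∃ (l : ℕ) (C : (Fin l → Bool) → Fin N → Bool),
        IsLDC l N (Fintype.card F - 1) c c C ∧ c ^ 2 * k / Real.log (1 / c) ≤ l := by
  obtain ⟨γ, hγ, n₁, hlines⟩ := exists_le_expect_density_puncturedLineDirections F hε
  have hs : (1 : ℝ) ≤ (Fintype.card F - 1 : ℕ) := by
    exact_mod_cast Nat.le_sub_of_add_le Fintype.one_lt_card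
  have hη : min γ 1 / 4 ≤ 1 / 2 := by linarith [min_le_right γ 1]
  refine ⟨max n₁ 1, min γ 1 / 4 / (20 * (Fintype.card F - 1 : ℕ)), by positivity,
    ⟨by positivity, (div_le_self (by positivity) (by linarith)).trans hη⟩, ?_⟩
  intro V _ _ _ _ N k _ hcard hN hgood
  have hN₀ : (0 : ℝ) < N := by exact_mod_cast (le_max_right n₁ 1).trans hN
  have hdensity := calc
    (1 / 2 : ℝ) ≤ density {z : Fin k → V | ∃ B : Finset V, ε * N ≤ #B ∧
        ∀ i, ∀ y ≠ 0, #{a : F | z i + a • y ∈ B} ≤ Fintype.card F - 2} := by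
      have hpos : (0 : ℝ) < Fintype.card (Fin k → V) := by exact_mod_cast Fintype.card_pos
      rw [Nat.card_eq_fintype_card] at hgood
      rw [density_eq_ncard_div, div_le_div_iff₀ two_pos hpos, one_mul, mul_comm]
      exact_mod_cast hgood
    _ ≤ density {z : Fin k → V | ∃ B : Set V,
          min γ 1 ≤ 𝔼 u, density (puncturedLineDirections F B u) ∧
            ∀ i, puncturedLineDirections F B (z i) = ∅} := by
      refine density_mono fun z ⟨B, hcardB, hB⟩ ↦
        ⟨B, (min_le_left γ 1).trans (hlines (B : Set V) (hcard ▸ (le_max_left n₁ 1).trans hN) ?_),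
          fun i ↦ puncturedLineDirections_eq_empty F (hB i)⟩
      rwa [density_eq_ncard_div, Set.ncard_coe_finset, hcard, le_div_iff₀ hN₀]
  obtain ⟨C, hC⟩ := exists_isAvgSmoothCode_of_half_le_density F (Fintype.equivFinOfCardEq hcard)
    (by positivity) hdensity
  exact hC.exists_isLDC hs (by positivity) hη

end LineCode

/-- LDCs from incidence geometry: if, for random points `z_1, …, z_k ∈ F_p^n`, with
probability at least `1/2` some set `B` of density `ε` meets every nontrivial line through
the `z_i` in at most `p−2` points, then there is a `(p−1, c, c)`-LDC of message length
`l = Ω(c²k/log(1/c))`. -/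
theorem lines_to_LDC :
    ∃ c0 : ℝ, 0 < c0 ∧
    ∀ p : ℕ, ∀ _ : Fact p.Prime, p ≠ 2 → ∀ ε : ℝ, ε ∈ Set.Ioc (0 : ℝ) 1 →
    ∃ (n1 : ℕ) (c : ℝ), 0 < n1 ∧ c ∈ Set.Ioc (0 : ℝ) (1/2) ∧
    ∀ n k : ℕ, n1 ≤ n → 0 < k →
    -- with probability at least 1/2 over independent uniform `z : Fin k → F_p^n` …
    Nat.card (Fin k → (Fin n → ZMod p)) ≤
      2 * Set.ncard {z : Fin k → (Fin n → ZMod p) |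
        ∃ B : Finset (Fin n → ZMod p),
          ε * (p : ℝ) ^ n ≤ B.card ∧
          -- every nontrivial line through one of the `z i` meets `B` in ≤ p−2 points
          ∀ i : Fin k, ∀ y : Fin n → ZMod p, y ≠ 0 →
            (Finset.univ.filter fun lam : ZMod p => z i + lam • y ∈ B).card ≤ p - 2} →
    ∃ (l : ℕ) (C : (Fin l → Bool) → Fin (p ^ n) → Bool),
      IsLDC l (p ^ n) (p - 1) c c C ∧
      c0 * c ^ 2 * k / Real.log (1/c) ≤ l := by
  refine ⟨1, one_pos, fun p _ _ ε hε ↦ ?_⟩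
  obtain ⟨n₁, c, hn₁, hc, hgeneral⟩ := lines_to_LDC_general (ZMod p) hε.1
  refine ⟨n₁, c, hn₁, hc, fun n k hn hk hgood ↦ ?_⟩
  have : NeZero k := ⟨hk.ne'⟩
  have hpn : n₁ ≤ p ^ n := hn.trans (Nat.lt_pow_self (Fact.out : p.Prime).one_lt).le
  have hcard : Fintype.card (Fin n → ZMod p) = p ^ n := by simp [ZMod.card]
  simpa only [ZMod.card, one_mul] using
    hgeneral k hcard hpn (by simpa only [ZMod.card, Nat.cast_pow] using hgood)
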